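/- Let $R_0$ be a Gorenstein domain, $\mathfrak{f} \geq 4$, $A = R/\operatorname{Pf}_4(\mathbf{X})$ with $R = R_0[x_{i,j}]$, and $N$ the image of $\mathbf{X}$ on $A^{\mathfrak f}$. Then $\operatorname{Ext}^i_A(N, A) = 0$ for all $i > 0$; consequently, splicing a free resolution of $N$ over $A$ with the dual of a free resolution of $N^* \cong N$ yields a totally acyclic complex of free $A$-modules. -/

import Mathlib

open CategoryTheory
set_option synthInstance.maxHeartbeats 1000000
set_option maxHeartbeats 4000000

noncomputable section
namespace AluffiStmt

universe u

/-- The index set for the entries of a generic `f × f` alternating matrix: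
pairs `(i, j)` with `i < j`. -/
abbrev P2 (f : ℕ) := {p : Fin f × Fin f // p.1 < p.2}

/-- `l` is a (weakly) regular sequence on `R`: each entry is a nonzerodivisor
modulo the ideal generated by the previous entries. -/
def IsRegSeq (R : Type*) [CommRing R] (l : List R) : Prop :=
  ∀ (i : ℕ) (h : i < l.length) (x : R),
    l.get ⟨i, h⟩ * x ∈ Ideal.span {y | y ∈ l.take i} →
      x ∈ Ideal.span {y | y ∈ l.take i}

/-- The grade of an ideal: the supremum of lengths of regular sequences on `R`
contained in `I`. -/
def grade {R : Type*} [CommRing R] (I : Ideal R) : ℕ :=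
  sSup {n | ∃ l : List R, l.length = n ∧ (∀ r ∈ l, r ∈ I) ∧ IsRegSeq R l}

/-- Projective dimension at most `n`, expressed by vanishing of `Ext^i (M, -)`
for all `i > n`. -/
def projDimLE (R : Type u) [CommRing R] (M : ModuleCat.{u} R) (n : ℕ) : Prop :=
  ∀ (N : ModuleCat.{u} R) (i : ℕ), n < i →
    Subsingleton (((Ext R (ModuleCat.{u} R) i).obj (Opposite.op M)).obj N)

/-- `M` has projective dimension exactly `n`. -/
def projDimEq (R : Type u) [CommRing R] (M : ModuleCat.{u} R) (n : ℕ) : Prop :=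
  projDimLE R M n ∧ ∀ k : ℕ, projDimLE R M k → n ≤ k

/-- An ideal `I` is perfect if `grade I = pd_R (R/I)`. -/
def IsPerfectIdeal (R : Type u) [CommRing R] (I : Ideal R) : Prop :=
  projDimEq R (ModuleCat.of R (R ⧸ I)) (grade I)
/-- The `(i,j)` entry of the generic alternating matrix `X`. -/
def xv (R₀ : Type u) [CommRing R₀] (f : ℕ) (i j : Fin f) : MvPolynomial (P2 f) R₀ :=
  if h : i < j then MvPolynomial.X ⟨(i, j), h⟩
  else if h : j < i then - MvPolynomial.X ⟨(j, i), h⟩ else 0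

/-- The Pfaffian of the principal `4 × 4` submatrix of `X` with rows and
columns `i < j < k < l`. -/
def pf4 (R₀ : Type u) [CommRing R₀] (f : ℕ) (i j k l : Fin f) : MvPolynomial (P2 f) R₀ :=
  xv R₀ f i j * xv R₀ f k l - xv R₀ f i k * xv R₀ f j l + xv R₀ f i l * xv R₀ f j k

/-- The ideal `Pf₄(X)` generated by all `4 × 4` principal Pfaffians of the
generic alternating matrix `X`. -/
def Pf4 (R₀ : Type u) [CommRing R₀] (f : ℕ) : Ideal (MvPolynomial (P2 f) R₀) :=
  Ideal.span {p | ∃ i j k l : Fin f, i < j ∧ j < k ∧ k < l ∧ p = pf4 R₀ f i j k l}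
/-- Self-injective dimension at most `n`: `Ext^i(-, R)` vanishes for `i > n`. -/
def selfInjDimLE (R : Type u) [CommRing R] (n : ℕ) : Prop :=
  ∀ (M : ModuleCat.{u} R) (i : ℕ), n < i →
    Subsingleton (((Ext R (ModuleCat.{u} R) i).obj (Opposite.op M)).obj (ModuleCat.of R R))

/-- A ring is Gorenstein if it is Noetherian and every localization at a prime
has finite self-injective dimension. -/
def IsGorensteinRing (R : Type u) [CommRing R] : Prop :=
  IsNoetherianRing R ∧ ∀ (P : Ideal R) [P.IsPrime],
    ∃ n : ℕ, selfInjDimLE (Localization.AtPrime P) n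

/-- The generic alternating matrix with entries in `A = R/Pf₄(X)`. -/
def XA (R₀ : Type u) [CommRing R₀] (f : ℕ) :
    Matrix (Fin f) (Fin f) (MvPolynomial (P2 f) R₀ ⧸ Pf4 R₀ f) :=
  fun i j => Ideal.Quotient.mk _ (xv R₀ f i j)

/-- `N` = the image of `X` acting on `A^f`, as an `A`-module. -/
def NA (R₀ : Type u) [CommRing R₀] (f : ℕ) :
    Submodule (MvPolynomial (P2 f) R₀ ⧸ Pf4 R₀ f)
      (Fin f → MvPolynomial (P2 f) R₀ ⧸ Pf4 R₀ f) :=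
  LinearMap.range (XA R₀ f).mulVecLin

/-!
Let `A` be the Pfaffian ring and `S = R[T₁, …, T_{2f-3}]`, acting on `A` through the sums
`T_r ↦ ∑_{i+j=r} x_{i,j}`. These sums and the Pfaffian (Plücker) relations straighten every monomial
in the entries into an `S`-combination of the monomials `x_b` of finitely many *inner* chains `b`.
The entries map to the `2 × 2` minors of a generic `2 × f` matrix, where the monomials of the weak
chains are independent; there are as many of these in each degree as of the products `T ^ α x_b`,
so the `x_b` are independent too and `A` is `S`-free.

The trace `σ : A → S` is the coordinate at the longest inner chain. Complementation of chains makes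
the Gram determinant of `(a, b) ↦ σ (a * b)` homogeneous of degree `0`, hence a constant. It is
nonzero modulo every maximal ideal of `R`, because over a field `A` is a domain and `σ ≠ 0`; so it
is a unit and the pairing is perfect. Therefore `Hom_A(Q, A) ≅ Hom_S(Q, S)` naturally in the
`A`-module `Q`, and `Ext_A^i(M, A)` vanishes for `i > 0` as soon as `M` is projective over `S`. The
column module `N` is `S`-free by an explicit basis, found by deleting the last row and column of the
matrix, and so its dual `Hom_A(N, A) ≅ Hom_S(N, S)` is projective over `S`.
-/

/-! ### Linear independence -/

section LinearIndependence

variable {R ι : Type*} [CommRing R]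

theorem linearIndependent_of_mem_span_range {V : Type*} [AddCommGroup V] [Module R V] [Finite ι]
    {v w : ι → V} (hspan : ∀ i, w i ∈ Submodule.span R (Set.range v))
    (hw : LinearIndependent R w) : LinearIndependent R v := by
  classical
  cases nonempty_fintype ι
  obtain ⟨M, hM⟩ : ∃ M : Matrix ι ι R, ∀ i, ∑ j, M i j • v j = w i :=
    Classical.skolem.1 fun i ↦ Submodule.mem_span_range_iff_exists_fun R |>.1 (hspan i)
  have sum_smul_w (d : ι → R) : ∑ i, d i • w i = ∑ j, Matrix.vecMul d M j • v j := by
    simp only [← hM, Finset.smul_sum, smul_smul, Matrix.vecMul, dotProduct, Finset.sum_smul]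
    exact Finset.sum_comm
  rw [Fintype.linearIndependent_iff] at hw ⊢
  have hrow : LinearIndependent R (M.row) := Fintype.linearIndependent_iff.2 fun d hd ↦
    hw d (by simp [sum_smul_w, (Matrix.vecMul_eq_sum d M).trans hd])
  have hdet := Matrix.nonsingular_iff_det_mem_nonZeroDivisors.1 (.of_linearIndependent_row hrow)
  intro c hc i
  have hadj : Matrix.vecMul (Matrix.vecMul c M.adjugate) M = M.det • c := by
    rw [Matrix.vecMul_vecMul, Matrix.adjugate_mul, Matrix.vecMul_smul, Matrix.vecMul_one]
  have hzero : Matrix.vecMul c M.adjugate = 0 := funext <| hw _ <| by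
    rw [sum_smul_w, hadj]
    simp only [Pi.smul_apply, smul_eq_mul, mul_smul, ← Finset.smul_sum, hc, smul_zero]
  rw [hzero, Matrix.zero_vecMul] at hadj
  exact (mem_nonZeroDivisors_iff_left.1 hdet) _ (congrFun hadj i).symm

theorem linearIndependent_of_mem_span_image_le {V : Type*} [AddCommGroup V] [Module R V]
    {v w : ι → V} (deg : ι → ℕ) (hfin : ∀ n, {i | deg i ≤ n}.Finite)
    (hspan : ∀ i, w i ∈ Submodule.span R (v '' {j | deg j ≤ deg i}))
    (hw : LinearIndependent R w) : LinearIndependent R v := by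
  have hmono : Monotone fun n ↦ {i | deg i ≤ n} := fun _ _ h _ hi ↦ le_trans hi h
  have hindep n : LinearIndepOn R v {i | deg i ≤ n} := by
    have := (hfin n).to_subtype
    refine linearIndependent_of_mem_span_range (w := fun i : {i | deg i ≤ n} ↦ w i)
      (fun i ↦ ?_) (hw.comp _ Subtype.val_injective)
    rw [← Set.image_eq_range]
    exact Submodule.span_mono (Set.image_mono (hmono i.2)) (hspan i)
  have hunion := linearIndepOn_iUnion_of_directed hmono.directed_le hindep
  rwa [Set.iUnion_eq_univ_iff.2 fun i ↦ ⟨deg i, le_refl (deg i)⟩, linearIndepOn_univ_iff] at hunion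

theorem linearIndependent_of_coeff {D : Type*} [Ring D] [Module R D] {p : ι → Polynomial D}
    (n : ι → ℕ) (hp : ∀ i, (p i).natDegree ≤ n i)
    (hcoeff : LinearIndependent R fun i ↦ (p i).coeff (n i)) : LinearIndependent R p := by
  classical
  rw [linearIndependent_iff'] at hcoeff ⊢
  intro s g hg
  by_contra! ⟨i₀, hi₀, hgi₀⟩
  obtain ⟨j, hj, hmax⟩ := (s.filter (g · ≠ 0)).exists_max_image n ⟨i₀, by simp [hi₀, hgi₀]⟩
  refine (Finset.mem_filter.1 hj).2 <|
    hcoeff ((s.filter (g · ≠ 0)).filter (n · = n j)) g ?_ j (by simp [(Finset.mem_filter.1 hj)])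
  have htop := congrArg (Polynomial.coeff · (n j)) hg
  simp only [Polynomial.finsetSum_coeff, Polynomial.coeff_smul, Polynomial.coeff_zero] at htop
  rw [← htop, Finset.sum_filter, Finset.sum_filter]
  refine Finset.sum_congr rfl fun i hi ↦ ?_
  by_cases hgi : g i = 0
  · simp [hgi]
  have hle : n i ≤ n j := hmax i (by simp [hi, hgi])
  rw [if_pos hgi]
  split_ifs with hij
  · rw [hij]
  · rw [Polynomial.coeff_eq_zero_of_natDegree_lt ((hp i).trans_lt (lt_of_le_of_ne hle hij)),
      smul_zero]

end LinearIndependence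

/-! ### Straightening -/

/-- The positions `(i, j)`, `i < j < f`, above the diagonal of an `f × f` matrix, numbered from `0`.
The entries with `i + j = r` form the cells of rank `r`. -/
def cells (f : ℕ) : Finset (ℕ × ℕ) :=
  (Finset.range f ×ˢ Finset.range f).filter fun c ↦ c.1 < c.2

lemma mem_cells {f : ℕ} {c : ℕ × ℕ} : c ∈ cells f ↔ c.1 < c.2 ∧ c.2 < f := by
  simp only [cells, Finset.mem_filter, Finset.mem_product, Finset.mem_range]
  omega

/-- A chain of cells not on the border of the matrix, increasing strictly in both coordinates. -/
structure IsInnerChain (f : ℕ) (b : Finset (ℕ × ℕ)) : Prop where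
  inner : ∀ c ∈ b, 1 ≤ c.1 ∧ c.1 < c.2 ∧ c.2 + 2 ≤ f
  strict : ∀ c ∈ b, ∀ d ∈ b, c ≠ d → (c.1 < d.1 ∧ c.2 < d.2) ∨ (d.1 < c.1 ∧ d.2 < c.2)

lemma IsInnerChain.subset_cells {f : ℕ} {b : Finset (ℕ × ℕ)} (hb : IsInnerChain f b) :
    b ⊆ cells f := fun c hc ↦ by
  have := hb.inner c hc
  rw [mem_cells]; omega

/-- The potential that grows when nested pairs of cells are uncrossed and, to second order, when a
cell moves down along its antidiagonal. -/
def cellWeight (f : ℕ) (c : ℕ × ℕ) : ℕ := f * (c.1 + c.2) ^ 2 + c.1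

/-- The total potential of a multiset of cells. -/
def weight (f : ℕ) (C : Multiset (ℕ × ℕ)) : ℕ := (C.map (cellWeight f)).sum

@[simp] lemma weight_cons (f : ℕ) (c : ℕ × ℕ) (C : Multiset (ℕ × ℕ)) :
    weight f (c ::ₘ C) = cellWeight f c + weight f C := by simp [weight]

lemma weight_le {f : ℕ} {C : Multiset (ℕ × ℕ)} (hC : ∀ c ∈ C, c ∈ cells f) :
    weight f C ≤ C.card * (f * (2 * f) ^ 2 + f) := by
  have hle : ∀ n ∈ C.map (cellWeight f), n ≤ f * (2 * f) ^ 2 + f := by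
    simp only [Multiset.mem_map, forall_exists_index, and_imp, forall_apply_eq_imp_iff₂]
    intro c hc
    have := mem_cells.1 (hC c hc)
    unfold cellWeight
    gcongr <;> omega
  simpa [weight] using Multiset.sum_le_card_nsmul _ _ hle

lemma cellWeight_uncross_le (f : ℕ) {i j k l : ℕ} (hij : i < j) (hkl : k < l) :
    cellWeight f (i, l) + cellWeight f (j, k) + 2 * f ≤
      cellWeight f (i, k) + cellWeight f (j, l) := by
  obtain ⟨a, rfl⟩ := Nat.exists_eq_add_of_lt hij
  obtain ⟨d, rfl⟩ := Nat.exists_eq_add_of_lt hkl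
  simp only [cellWeight]
  nlinarith [Nat.zero_le (f * a), Nat.zero_le (f * d), Nat.zero_le (f * a * d)]

lemma cellWeight_uncross_le' (f : ℕ) {i j k l : ℕ} (hij : i < j) (hjk : j < k) (hkl : k < l) :
    cellWeight f (i, l) + cellWeight f (j, k) + 2 * f ≤
      cellWeight f (i, j) + cellWeight f (k, l) := by
  have hswap : cellWeight f (j, k) ≤ cellWeight f (k, j) := by
    simp only [cellWeight, add_comm k j]; omega
  have := cellWeight_uncross_le f (hij.trans hjk) (hjk.trans hkl)
  omega

section Straightening

variable {A : Type*} [CommRing A]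

/-- The monomial attached to a multiset of cells. -/
def cellProd (x : ℕ × ℕ → A) (C : Multiset (ℕ × ℕ)) : A := (C.map x).prod

@[simp] lemma cellProd_zero (x : ℕ × ℕ → A) : cellProd x 0 = 1 := by simp [cellProd]

@[simp] lemma cellProd_cons (x : ℕ × ℕ → A) (c : ℕ × ℕ) (C : Multiset (ℕ × ℕ)) :
    cellProd x (c ::ₘ C) = x c * cellProd x C := by simp [cellProd]

lemma cellProd_add (x : ℕ × ℕ → A) (C D : Multiset (ℕ × ℕ)) :
    cellProd x (C + D) = cellProd x C * cellProd x D := by simp [cellProd]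

/-- The sum of all entries of rank `r`; these sums will be the parameters. -/
def rankSum (x : ℕ × ℕ → A) (f r : ℕ) : A :=
  ∑ c ∈ (cells f).filter fun c ↦ c.1 + c.2 = r, x c

/-- The vanishing of the `4 × 4` Pfaffians, read as a rule for replacing the nested pair
`(i, l), (j, k)`. -/
def PluckerRel (f : ℕ) (x : ℕ × ℕ → A) : Prop :=
  ∀ i j k l, i < j → j < k → k < l → l < f →
    x (i, l) * x (j, k) = x (i, k) * x (j, l) - x (i, j) * x (k, l)

/-- A filtration that is stable under the parameters and in which the monomial of each inner chain
either lies or can be exchanged, modulo a parameter, for monomials that do not occur in it. -/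
structure IsStraighteningFiltration (f : ℕ) (x : ℕ × ℕ → A) (Q : ℕ → AddSubgroup A) : Prop where
  rankSum_mul_mem : ∀ {m r : ℕ} {a : A}, 1 ≤ r → r + 3 ≤ 2 * f → a ∈ Q m →
    rankSum x f r * a ∈ Q (m + 1)
  innerChain_mem : ∀ b, IsInnerChain f b → cellProd x b.val ∈ Q b.card ∨
    ∃ c ∈ b, ∀ c' ∈ cells f, c'.1 + c'.2 = c.1 + c.2 → c'.1 < c.1 →
      x c' * cellProd x (b.val.erase c) ∈ Q b.card

variable {f : ℕ} {x : ℕ × ℕ → A}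

lemma mul_mul_cellProd_mem_of_nested (hx : PluckerRel f x) {Q : AddSubgroup A} {m N : ℕ}
    (heavier : ∀ D : Multiset (ℕ × ℕ), (∀ d ∈ D, d ∈ cells f) → D.card = m → N < weight f D →
      cellProd x D ∈ Q)
    {c p : ℕ × ℕ} {E : Multiset (ℕ × ℕ)} (hc : c ∈ cells f) (hp : p ∈ cells f)
    (hE : ∀ e ∈ E, e ∈ cells f) (hm : E.card + 2 = m) (h₁ : c.1 < p.1) (h₂ : p.2 < c.2)
    (hN : N < cellWeight f c + cellWeight f p + weight f E + 2 * f) :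
    x c * (x p * cellProd x E) ∈ Q := by
  obtain ⟨i, l⟩ := c
  obtain ⟨j, k⟩ := p
  rw [mem_cells] at hc hp
  dsimp only at hc hp h₁ h₂
  have plucker : x (i, l) * (x (j, k) * cellProd x E) =
      cellProd x ((i, k) ::ₘ (j, l) ::ₘ E) - cellProd x ((i, j) ::ₘ (k, l) ::ₘ E) := by
    rw [← mul_assoc, hx i j k l h₁ hp.1 h₂ hc.2, cellProd_cons, cellProd_cons, cellProd_cons,
      cellProd_cons]
    ring
  have cells_cons : ∀ {c d : ℕ × ℕ}, c ∈ cells f → d ∈ cells f →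
      ∀ e ∈ c ::ₘ d ::ₘ E, e ∈ cells f := fun hc hd ↦
    Multiset.forall_mem_cons.2 ⟨hc, Multiset.forall_mem_cons.2 ⟨hd, hE⟩⟩
  rw [plucker]
  refine Q.sub_mem
    (heavier _ (cells_cons (mem_cells.2 (by omega)) (mem_cells.2 (by omega))) (by simpa) ?_)
    (heavier _ (cells_cons (mem_cells.2 (by omega)) (mem_cells.2 (by omega))) (by simpa) ?_)
  · have := cellWeight_uncross_le f h₁ h₂
    simp only [weight_cons]; omega
  · have := cellWeight_uncross_le' f h₁ hp.1 h₂
    simp only [weight_cons]; omega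

lemma cellProd_cons_mem_of_exchange {Q : AddSubgroup A} {c : ℕ × ℕ} {D : Multiset (ℕ × ℕ)}
    (hc : c ∈ cells f) (hrank : rankSum x f (c.1 + c.2) * cellProd x D ∈ Q)
    (hlower : ∀ c' ∈ cells f, c'.1 + c'.2 = c.1 + c.2 → c'.1 < c.1 → x c' * cellProd x D ∈ Q)
    (hupper : ∀ c' ∈ cells f, c'.1 + c'.2 = c.1 + c.2 → c.1 < c'.1 → x c' * cellProd x D ∈ Q) :
    cellProd x (c ::ₘ D) ∈ Q := by
  have exchange : cellProd x (c ::ₘ D) = rankSum x f (c.1 + c.2) * cellProd x D -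
      ∑ d ∈ ((cells f).filter fun d ↦ d.1 + d.2 = c.1 + c.2).erase c, x d * cellProd x D := by
    have hmem : c ∈ (cells f).filter fun d ↦ d.1 + d.2 = c.1 + c.2 := by simp [hc]
    rw [rankSum, ← Finset.add_sum_erase _ _ hmem, add_mul, Finset.sum_mul, cellProd_cons]
    ring
  rw [exchange]
  refine Q.sub_mem hrank (Q.sum_mem fun d hd ↦ ?_)
  simp only [Finset.mem_erase, Finset.mem_filter] at hd
  obtain ⟨hne, hd, hr⟩ := hd
  rcases lt_trichotomy d.1 c.1 with h | h | h
  · exact hlower d hd hr h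
  · exact absurd (Prod.ext h (by omega)) hne
  · exact hupper d hd hr h

/-- The inductive hypothesis of the straightening procedure: monomials of smaller degree, and
monomials of the same degree and larger weight, lie in the filtration. -/
def StraightenedAbove (f : ℕ) (x : ℕ × ℕ → A) (Q : ℕ → AddSubgroup A)
    (C : Multiset (ℕ × ℕ)) : Prop :=
  ∀ D : Multiset (ℕ × ℕ), (∀ d ∈ D, d ∈ cells f) →
    D.card < C.card ∨ D.card = C.card ∧ weight f C < weight f D → cellProd x D ∈ Q D.card

namespace StraightenedAbove

variable {Q : ℕ → AddSubgroup A} {C : Multiset (ℕ × ℕ)} {c p : ℕ × ℕ}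

lemma mem_of_lower (h : StraightenedAbove f x Q C) (hQ : IsStraighteningFiltration f x Q)
    (hC : ∀ d ∈ C, d ∈ cells f) (hc : c ∈ C)
    (hlower : ∀ c' ∈ cells f, c'.1 + c'.2 = c.1 + c.2 → c'.1 < c.1 →
      x c' * cellProd x (C.erase c) ∈ Q C.card) :
    cellProd x C ∈ Q C.card := by
  obtain ⟨D, rfl⟩ := Multiset.exists_cons_of_mem hc
  obtain ⟨hc', hD⟩ := Multiset.forall_mem_cons.1 hC
  have := mem_cells.1 hc'
  simp only [Multiset.erase_cons_head, Multiset.card_cons] at hlower ⊢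
  refine cellProd_cons_mem_of_exchange hc'
    (hQ.rankSum_mul_mem (by omega) (by omega) (h D hD (by simp))) hlower fun d hd hr hlt ↦ ?_
  rw [← cellProd_cons, ← Multiset.card_cons d D]
  refine h _ (Multiset.forall_mem_cons.2 ⟨hd, hD⟩) (.inr ⟨by simp, ?_⟩)
  simp only [weight_cons, cellWeight, hr]
  omega

lemma mul_mem_of_nested (h : StraightenedAbove f x Q C) (hx : PluckerRel f x)
    (hC : ∀ d ∈ C, d ∈ cells f) (hc : c ∈ C) (hp : p ∈ C.erase c) {c' : ℕ × ℕ}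
    (hc' : c' ∈ cells f) (hr : c'.1 + c'.2 = c.1 + c.2) (h₁ : c'.1 < p.1) (h₂ : p.2 < c'.2) :
    x c' * cellProd x (C.erase c) ∈ Q C.card := by
  obtain ⟨D, rfl⟩ := Multiset.exists_cons_of_mem hc
  rw [Multiset.erase_cons_head] at hp ⊢
  obtain ⟨E, rfl⟩ := Multiset.exists_cons_of_mem hp
  obtain ⟨hcf, hpf, hE⟩ : c ∈ cells f ∧ p ∈ cells f ∧ ∀ e ∈ E, e ∈ cells f := by
    simpa only [Multiset.forall_mem_cons] using hC
  have := mem_cells.1 hcf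
  rw [cellProd_cons]
  refine mul_mul_cellProd_mem_of_nested hx (m := (c ::ₘ p ::ₘ E).card)
    (N := weight f (c ::ₘ p ::ₘ E)) (fun F hF hcard hw ↦ ?_) hc' hpf hE (by simp) h₁ h₂ ?_
  · rw [← hcard]
    exact h F hF (.inr ⟨hcard, hw⟩)
  simp only [weight_cons, cellWeight, hr]
  omega

lemma mem_of_nested (h : StraightenedAbove f x Q C) (hx : PluckerRel f x)
    (hC : ∀ d ∈ C, d ∈ cells f) (hc : c ∈ C) (hp : p ∈ C) (h₁ : c.1 < p.1) (h₂ : p.2 < c.2) :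
    cellProd x C ∈ Q C.card := by
  have hp' : p ∈ C.erase c := (Multiset.mem_erase_of_ne (by rintro rfl; omega)).2 hp
  simpa only [← cellProd_cons, Multiset.cons_erase hc] using
    h.mul_mem_of_nested hx hC hc hp' (hC c hc) rfl h₁ h₂

lemma mem_of_lower_nested (h : StraightenedAbove f x Q C) (hx : PluckerRel f x)
    (hQ : IsStraighteningFiltration f x Q) (hC : ∀ d ∈ C, d ∈ cells f) (hc : c ∈ C)
    (hp : p ∈ C.erase c)
    (hnest : ∀ c' : ℕ × ℕ, c'.1 + c'.2 = c.1 + c.2 → c'.1 < c.1 → c'.1 < p.1 ∧ p.2 < c'.2) :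
    cellProd x C ∈ Q C.card :=
  h.mem_of_lower hQ hC hc fun c' hc' hr hlt ↦
    h.mul_mem_of_nested hx hC hc hp hc' hr (hnest c' hr hlt).1 (hnest c' hr hlt).2

end StraightenedAbove

lemma isInnerChain_of_forall {C : Multiset (ℕ × ℕ)} (hC : ∀ d ∈ C, d ∈ cells f)
    (hnest : ∀ c ∈ C, ∀ p ∈ C, c.1 < p.1 → c.2 ≤ p.2)
    (hborder : ∀ c ∈ C, c.1 ≠ 0 ∧ c.2 + 1 ≠ f)
    (hrow : ∀ c ∈ C, ∀ p ∈ C.erase c, c.1 = p.1 → c.2 < p.2)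
    (hcol : ∀ c ∈ C, ∀ p ∈ C.erase c, c.2 = p.2 → p.1 < c.1) :
    ∃ b : Finset (ℕ × ℕ), IsInnerChain f b ∧ b.val = C := by
  have hnodup : C.Nodup := by
    rw [Multiset.nodup_iff_count_le_one]
    by_contra! ⟨c, hcount⟩
    have hc : c ∈ C.erase c := by rw [← Multiset.count_pos, Multiset.count_erase_self]; omega
    exact lt_irrefl _ (hrow c (Multiset.mem_of_mem_erase hc) c hc rfl)
  refine ⟨⟨C, hnodup⟩, ⟨fun c hc ↦ ?_, fun c hc d hd hne ↦ ?_⟩, rfl⟩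
  · have := mem_cells.1 (hC c hc)
    have := hborder c hc
    omega
  · have hd' : d ∈ C.erase c := (Multiset.mem_erase_of_ne hne.symm).2 hd
    have hc' : c ∈ C.erase d := (Multiset.mem_erase_of_ne hne).2 hc
    have := hnest c hc d hd
    have := hnest d hd c hc
    have := hrow c hc d hd'
    have := hrow d hd c hc'
    have := hcol c hc d hd'
    have := hcol d hd c hc'
    omega

lemma StraightenedAbove.mem {Q : ℕ → AddSubgroup A} {C : Multiset (ℕ × ℕ)}
    (h : StraightenedAbove f x Q C) (hx : PluckerRel f x) (hQ : IsStraighteningFiltration f x Q)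
    (hC : ∀ d ∈ C, d ∈ cells f) : cellProd x C ∈ Q C.card := by
  by_cases hnest : ∃ c ∈ C, ∃ p ∈ C, c.1 < p.1 ∧ p.2 < c.2
  · obtain ⟨c, hc, p, hp, h₁, h₂⟩ := hnest
    exact h.mem_of_nested hx hC hc hp h₁ h₂
  by_cases hborder : ∃ c ∈ C, c.1 = 0 ∨ c.2 + 1 = f
  · obtain ⟨c, hc, hcb⟩ := hborder
    refine h.mem_of_lower hQ hC hc fun c' hc' hr hlt ↦ ?_
    have := mem_cells.1 hc'
    omega
  by_cases hrow : ∃ c ∈ C, ∃ p ∈ C.erase c, c.1 = p.1 ∧ p.2 ≤ c.2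
  · obtain ⟨c, hc, p, hp, h₁, h₂⟩ := hrow
    exact h.mem_of_lower_nested hx hQ hC hc hp fun c' hr hlt ↦ by omega
  by_cases hcol : ∃ c ∈ C, ∃ p ∈ C.erase c, c.2 = p.2 ∧ c.1 ≤ p.1
  · obtain ⟨c, hc, p, hp, h₁, h₂⟩ := hcol
    exact h.mem_of_lower_nested hx hQ hC hc hp fun c' hr hlt ↦ by omega
  push Not at hnest hborder hrow hcol
  obtain ⟨b, hb, rfl⟩ := isInnerChain_of_forall hC hnest hborder hrow hcol
  rcases hQ.innerChain_mem b hb with hmem | ⟨c, hc, hlower⟩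
  · exact hmem
  · exact h.mem_of_lower hQ hC hc hlower

theorem IsStraighteningFiltration.cellProd_mem {Q : ℕ → AddSubgroup A}
    (hQ : IsStraighteningFiltration f x Q) (hx : PluckerRel f x) (C : Multiset (ℕ × ℕ))
    (hC : ∀ d ∈ C, d ∈ cells f) : cellProd x C ∈ Q C.card :=
  StraightenedAbove.mem (fun D hD _ ↦ hQ.cellProd_mem hx D hD) hx hQ hC
termination_by (C.card, C.card * (f * (2 * f) ^ 2 + f) - weight f C)
decreasing_by
  have := weight_le hD
  rw [Prod.lex_def]
  rcases ‹_ ∨ _› with hcard | ⟨hcard, hw⟩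
  · exact .inl hcard
  · exact .inr ⟨hcard, by rw [hcard] at this ⊢; dsimp only; omega⟩

end Straightening

/-! ### Weak chains and Plücker coordinates -/

/-- A multiset of cells no two of which are strictly nested. -/
def IsWeakChain (C : Multiset (ℕ × ℕ)) : Prop :=
  ∀ c ∈ C, ∀ d ∈ C, ¬ (c.1 < d.1 ∧ d.2 < c.2)

namespace IsWeakChain

variable {C D : Multiset (ℕ × ℕ)}

lemma mono (hD : IsWeakChain D) (h : C ≤ D) : IsWeakChain C := fun c hc d hd ↦
  hD c (Multiset.mem_of_le h hc) d (Multiset.mem_of_le h hd)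

lemma mem_of_isGreatest (hC : IsWeakChain C) {i j : ℕ} (hi : IsGreatest {t | t ∈ C.map Prod.fst} i)
    (hj : IsGreatest {t | t ∈ C.map Prod.snd} j) : (i, j) ∈ C := by
  obtain ⟨c, hc, rfl⟩ := Multiset.mem_map.1 hi.1
  obtain ⟨d, hd, rfl⟩ := Multiset.mem_map.1 hj.1
  have hdc : d.1 ≤ c.1 := hi.2 (Multiset.mem_map_of_mem _ hd)
  have hcd : c.2 ≤ d.2 := hj.2 (Multiset.mem_map_of_mem _ hc)
  rcases hcd.eq_or_lt with h₂ | h₂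
  · rwa [← h₂]
  · have h₁ : c.1 = d.1 := by have := hC d hd c hc; omega
    rwa [h₁]

theorem ext (hC : IsWeakChain C) (hD : IsWeakChain D)
    (hfst : C.map Prod.fst = D.map Prod.fst) (hsnd : C.map Prod.snd = D.map Prod.snd) : C = D := by
  induction hn : C.card generalizing C D with
  | zero =>
    obtain rfl := Multiset.card_eq_zero.1 hn
    simpa [eq_comm] using hfst
  | succ n ih =>
    have exists_isGreatest (g : ℕ × ℕ → ℕ) : ∃ i, IsGreatest {t | t ∈ C.map g} i := by
      obtain ⟨c, hc⟩ := Multiset.card_pos_iff_exists_mem.1 (hn ▸ Nat.succ_pos n : 0 < C.card)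
      obtain ⟨d, hd, hmax⟩ := C.toFinset.exists_max_image g ⟨c, Multiset.mem_toFinset.2 hc⟩
      refine ⟨g d, Multiset.mem_map_of_mem g (Multiset.mem_toFinset.1 hd), fun t ht ↦ ?_⟩
      obtain ⟨e, he, rfl⟩ := Multiset.mem_map.1 ht
      exact hmax e (Multiset.mem_toFinset.2 he)
    obtain ⟨i, hi⟩ := exists_isGreatest Prod.fst
    obtain ⟨j, hj⟩ := exists_isGreatest Prod.snd
    obtain ⟨C, rfl⟩ := Multiset.exists_cons_of_mem (hC.mem_of_isGreatest hi hj)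
    obtain ⟨D, rfl⟩ := Multiset.exists_cons_of_mem
      (hD.mem_of_isGreatest (hfst ▸ hi) (hsnd ▸ hj))
    rw [ih (hC.mono (C.le_cons_self _)) (hD.mono (D.le_cons_self _)) (by simpa using hfst)
      (by simpa using hsnd) (by simpa using hn)]

end IsWeakChain

lemma disjSum_inj {α β : Type*} {s s' : Multiset α} {t t' : Multiset β}
    (h : s.disjSum t = s'.disjSum t') : s = s' ∧ t = t' := by
  classical
  have count_inl (a : α) (s : Multiset α) (t : Multiset β) :
      (s.disjSum t).count (.inl a) = s.count a := by
    rw [Multiset.disjSum, Multiset.count_add, Multiset.count_map_eq_count' _ _ Sum.inl_injective,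
      add_eq_left, Multiset.count_eq_zero]
    simp
  have count_inr (b : β) (s : Multiset α) (t : Multiset β) :
      (s.disjSum t).count (.inr b) = t.count b := by
    rw [Multiset.disjSum, Multiset.count_add, Multiset.count_map_eq_count' _ _ Sum.inr_injective,
      add_eq_right, Multiset.count_eq_zero]
    simp
  exact ⟨Multiset.ext' fun a ↦ by rw [← count_inl a s t, h, count_inl],
    Multiset.ext' fun b ↦ by rw [← count_inr b s t, h, count_inr]⟩

section PluckerCoord

variable (R : Type*) [CommRing R]

/-- The `2 × 2` minors `y_i z_j - y_j z_i` of the generic `2 × ℕ` matrix, whose rows are the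
variables indexed by the two summands of `ℕ ⊕ ℕ`. -/
def pluckerCoord (c : ℕ × ℕ) : MvPolynomial (ℕ ⊕ ℕ) R :=
  MvPolynomial.X (.inl c.1) * MvPolynomial.X (.inr c.2) -
    MvPolynomial.X (.inl c.2) * MvPolynomial.X (.inr c.1)

lemma pluckerRel_pluckerCoord (f : ℕ) : PluckerRel f (pluckerCoord R) := by
  intro i j k l _ _ _ _
  simp only [pluckerCoord]; ring

/-- The substitution `z_j ↦ z_j t ^ j`, under which the minor of a cell `(i, j)` with `i < j` has
leading coefficient `y_i z_j`. -/
def degeneration : MvPolynomial (ℕ ⊕ ℕ) R →ₐ[R] Polynomial (MvPolynomial (ℕ ⊕ ℕ) R) :=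
  MvPolynomial.aeval <| Sum.elim (fun i ↦ .C (.X (.inl i)))
    fun j ↦ .C (.X (.inr j)) * Polynomial.X ^ j

variable {R}

lemma degeneration_pluckerCoord (c : ℕ × ℕ) : degeneration R (pluckerCoord R c) =
    .C (.X (.inl c.1) * .X (.inr c.2)) * Polynomial.X ^ c.2 -
      .C (.X (.inl c.2) * .X (.inr c.1)) * Polynomial.X ^ c.1 := by
  simp only [degeneration, pluckerCoord, map_sub, map_mul, MvPolynomial.aeval_X, Sum.elim_inl,
    Sum.elim_inr]
  ring

lemma natDegree_degeneration_pluckerCoord_le {c : ℕ × ℕ} (hc : c.1 < c.2) :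
    (degeneration R (pluckerCoord R c)).natDegree ≤ c.2 := by
  rw [degeneration_pluckerCoord]
  exact (Polynomial.natDegree_sub_le _ _).trans <| max_le (Polynomial.natDegree_C_mul_X_pow_le _ _)
    ((Polynomial.natDegree_C_mul_X_pow_le _ _).trans hc.le)

lemma coeff_degeneration_pluckerCoord {c : ℕ × ℕ} (hc : c.1 < c.2) :
    (degeneration R (pluckerCoord R c)).coeff c.2 = .X (.inl c.1) * .X (.inr c.2) := by
  rw [degeneration_pluckerCoord, Polynomial.coeff_sub, Polynomial.coeff_C_mul_X_pow,
    Polynomial.coeff_C_mul_X_pow, if_pos rfl, if_neg hc.ne', sub_zero]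

variable {C : Multiset (ℕ × ℕ)}

lemma natDegree_degeneration_cellProd_le (hC : ∀ c ∈ C, c.1 < c.2) :
    (degeneration R (cellProd (pluckerCoord R) C)).natDegree ≤ (C.map Prod.snd).sum := by
  induction C using Multiset.induction with
  | empty => simp
  | cons c C ih =>
    obtain ⟨hc, hC⟩ := Multiset.forall_mem_cons.1 hC
    rw [cellProd_cons, map_mul, Multiset.map_cons, Multiset.sum_cons]
    exact Polynomial.natDegree_mul_le_of_le (natDegree_degeneration_pluckerCoord_le hc) (ih hC)

lemma coeff_degeneration_cellProd (hC : ∀ c ∈ C, c.1 < c.2) :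
    (degeneration R (cellProd (pluckerCoord R) C)).coeff (C.map Prod.snd).sum =
      MvPolynomial.monomial ((C.map Prod.fst).disjSum (C.map Prod.snd)).toFinsupp 1 := by
  induction C using Multiset.induction with
  | empty => simp [Multiset.disjSum]
  | cons c C ih =>
    obtain ⟨hc, hC⟩ := Multiset.forall_mem_cons.1 hC
    have disjSum_cons : ((c ::ₘ C).map Prod.fst).disjSum ((c ::ₘ C).map Prod.snd) =
        {.inl c.1} + {.inr c.2} + (C.map Prod.fst).disjSum (C.map Prod.snd) := by
      simp only [Multiset.disjSum, Multiset.map_cons]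
      simp only [← Multiset.singleton_add]
      abel
    rw [disjSum_cons, cellProd_cons, map_mul, Multiset.map_cons, Multiset.sum_cons,
      Polynomial.coeff_mul_add_eq_of_natDegree_le (natDegree_degeneration_pluckerCoord_le hc)
        (natDegree_degeneration_cellProd_le hC), ih hC, coeff_degeneration_pluckerCoord hc,
      map_add, map_add, Multiset.toFinsupp_singleton, Multiset.toFinsupp_singleton,
      MvPolynomial.X, MvPolynomial.X,
      MvPolynomial.monomial_mul, MvPolynomial.monomial_mul, one_mul, one_mul]

variable (R) in
theorem linearIndependent_cellProd_pluckerCoord {ι : Type*} {F : ι → Multiset (ℕ × ℕ)}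
    (hF : Function.Injective F) (hweak : ∀ i, IsWeakChain (F i))
    (hlt : ∀ i, ∀ c ∈ F i, c.1 < c.2) :
    LinearIndependent R fun i ↦ cellProd (pluckerCoord R) (F i) := by
  have exponent_injective : Function.Injective fun i ↦
      (((F i).map Prod.fst).disjSum ((F i).map Prod.snd)).toFinsupp := fun i j hij ↦ by
    obtain ⟨hfst, hsnd⟩ := disjSum_inj (Multiset.toFinsupp.injective hij)
    exact hF ((hweak i).ext (hweak j) hfst hsnd)
  refine .of_comp (degeneration R).toLinearMap <| linearIndependent_of_coeff
    (fun i ↦ ((F i).map Prod.snd).sum)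
    (fun i ↦ natDegree_degeneration_cellProd_le (hlt i)) ?_
  have coeff_eq : (fun i ↦ ((degeneration R).toLinearMap (cellProd (pluckerCoord R) (F i))).coeff
      ((F i).map Prod.snd).sum) = MvPolynomial.basisMonomials (ℕ ⊕ ℕ) R ∘ fun i ↦
        (((F i).map Prod.fst).disjSum ((F i).map Prod.snd)).toFinsupp := by
    funext i
    simpa using coeff_degeneration_cellProd (hlt i)
  exact coeff_eq ▸ (MvPolynomial.basisMonomials (ℕ ⊕ ℕ) R).linearIndependent.comp _
    exponent_injective

end PluckerCoord

/-! ### The path through a chain -/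

/-- The index set of the basis of `A` over the parameter ring. -/
abbrev InnerChain (f : ℕ) := {b : Finset (ℕ × ℕ) // IsInnerChain f b}

instance (f : ℕ) : Fintype (InnerChain f) :=
  Fintype.ofInjective (fun b : InnerChain f ↦
    (⟨b.1, Finset.mem_powerset.2 b.2.subset_cells⟩ : (cells f).powerset))
    fun _ _ h ↦ Subtype.ext (Subtype.mk_eq_mk.1 h)

section Path

variable (f : ℕ) (b : Finset (ℕ × ℕ))

/-- The first coordinate of `pathCell`: the least one for which the cell of rank `r` stays inside
the matrix and is not strictly nested with any cell of `b`. -/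
def pathFst (r : ℕ) : ℕ := max (r + 1 - f) (b.sup fun c ↦ min c.1 (r - c.2))

/-- The cell of rank `r` on the lattice path through the chain `b`. -/
def pathCell (r : ℕ) : ℕ × ℕ := (pathFst f b r, r - pathFst f b r)

variable {f b}

lemma pathFst_le_iff {r t : ℕ} :
    pathFst f b r ≤ t ↔ r + 1 - f ≤ t ∧ ∀ c ∈ b, min c.1 (r - c.2) ≤ t := by
  rw [pathFst, max_le_iff, Finset.sup_le_iff]

lemma le_pathFst (r : ℕ) : r + 1 - f ≤ pathFst f b r := (pathFst_le_iff.1 le_rfl).1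

lemma min_le_pathFst {c : ℕ × ℕ} (hc : c ∈ b) (r : ℕ) : min c.1 (r - c.2) ≤ pathFst f b r :=
  (pathFst_le_iff.1 le_rfl).2 c hc

variable (f b) in
lemma pathFst_cases (r : ℕ) : pathFst f b r = r + 1 - f ∨ pathFst f b r = 0 ∨
    ∃ c ∈ b, pathFst f b r = min c.1 (r - c.2) := by
  rcases max_choice (r + 1 - f) (b.sup fun c ↦ min c.1 (r - c.2)) with h | h
  · exact .inl h
  rcases b.eq_empty_or_nonempty with rfl | hne
  · exact .inr (.inl (by rw [pathFst, h, Finset.sup_empty, bot_eq_zero]))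
  · obtain ⟨c, hc, hsup⟩ := b.exists_mem_eq_sup hne fun c ↦ min c.1 (r - c.2)
    exact .inr (.inr ⟨c, hc, by rw [pathFst, h, hsup]⟩)

lemma pathFst_mono {r s : ℕ} (h : r ≤ s) : pathFst f b r ≤ pathFst f b s := by
  refine pathFst_le_iff.2 ⟨?_, fun c hc ↦ ?_⟩
  · have := le_pathFst (f := f) (b := b) s; omega
  · have := min_le_pathFst (f := f) hc s; omega

lemma pathFst_le_add {r s : ℕ} (h : r ≤ s) : pathFst f b s ≤ pathFst f b r + (s - r) := by
  refine pathFst_le_iff.2 ⟨?_, fun c hc ↦ ?_⟩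
  · have := le_pathFst (f := f) (b := b) r; omega
  · have := min_le_pathFst (f := f) hc r; omega

variable (f b) in
lemma not_nested_pathCell (r s : ℕ) : ¬ ((pathCell f b r).1 < (pathCell f b s).1 ∧
    (pathCell f b s).2 < (pathCell f b r).2) := by
  simp only [pathCell]
  rcases le_total r s with h | h
  · have := pathFst_mono (f := f) (b := b) h
    have := pathFst_le_add (f := f) (b := b) h
    omega
  · have := pathFst_mono (f := f) (b := b) h
    omega

namespace IsInnerChain

lemma pathCell_mem (hb : IsInnerChain f b) {r : ℕ} (h₁ : 1 ≤ r) (h₂ : r + 3 ≤ 2 * f) :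
    pathCell f b r ∈ cells f := by
  have := le_pathFst (f := f) (b := b) r
  have : 2 * pathFst f b r < r := by
    rcases pathFst_cases f b r with h | h | ⟨c, hc, h⟩
    · omega
    · omega
    · have := hb.inner c hc
      omega
  simp only [mem_cells, pathCell]
  omega

lemma rank_pathCell (hb : IsInnerChain f b) {r : ℕ} (h₁ : 1 ≤ r) (h₂ : r + 3 ≤ 2 * f) :
    (pathCell f b r).1 + (pathCell f b r).2 = r := by
  have := mem_cells.1 (hb.pathCell_mem h₁ h₂)
  simp only [pathCell] at *
  omega

lemma pathCell_eq (hb : IsInnerChain f b) {c : ℕ × ℕ} (hc : c ∈ b) :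
    pathCell f b (c.1 + c.2) = c := by
  have hinner := hb.inner c hc
  have hge : c.1 ≤ pathFst f b (c.1 + c.2) := by
    have := min_le_pathFst (f := f) hc (c.1 + c.2)
    omega
  have hle : pathFst f b (c.1 + c.2) ≤ c.1 := by
    refine pathFst_le_iff.2 ⟨by omega, fun d hd ↦ ?_⟩
    obtain rfl | hne := eq_or_ne c d
    · omega
    · have := hb.strict c hc d hd hne
      omega
  ext <;> simp only [pathCell] <;> omega

end IsInnerChain

/-- The weak chain consisting of `b` and of the path cells of rank `k + 1` with multiplicity
`α k`. It indexes the monomial `T ^ α` times the basis element of `b`. -/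
def weakChainOf (f : ℕ) (b : Finset (ℕ × ℕ)) (α : Fin (2 * f - 3) →₀ ℕ) : Multiset (ℕ × ℕ) :=
  b.val + α.toMultiset.map fun k : Fin (2 * f - 3) ↦ pathCell f b (k + 1)

variable {α α' : Fin (2 * f - 3) →₀ ℕ}

lemma card_weakChainOf (f : ℕ) (b : Finset (ℕ × ℕ)) (α : Fin (2 * f - 3) →₀ ℕ) :
    (weakChainOf f b α).card = b.card + α.degree := by
  simp [weakChainOf, Finsupp.card_toMultiset, Finsupp.degree_apply, Finsupp.sum]

namespace IsInnerChain

variable {b' : Finset (ℕ × ℕ)} {c : ℕ × ℕ}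

lemma exists_eq_pathCell (hb : IsInnerChain f b) (hc : c ∈ weakChainOf f b α) :
    ∃ r, 1 ≤ r ∧ r + 3 ≤ 2 * f ∧ c = pathCell f b r := by
  rcases Multiset.mem_add.1 hc with hc | hc
  · have := hb.inner c hc
    exact ⟨c.1 + c.2, by omega, by omega, (hb.pathCell_eq hc).symm⟩
  · obtain ⟨k, _, rfl⟩ := Multiset.mem_map.1 hc
    exact ⟨k + 1, by omega, by omega, rfl⟩

lemma mem_cells_of_mem_weakChainOf (hb : IsInnerChain f b) (hc : c ∈ weakChainOf f b α) :
    c ∈ cells f := by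
  obtain ⟨r, h₁, h₂, rfl⟩ := hb.exists_eq_pathCell hc
  exact hb.pathCell_mem h₁ h₂

lemma isWeakChain_weakChainOf (hb : IsInnerChain f b) (α : Fin (2 * f - 3) →₀ ℕ) :
    IsWeakChain (weakChainOf f b α) := by
  intro c hc d hd
  obtain ⟨r, _, _, rfl⟩ := hb.exists_eq_pathCell hc
  obtain ⟨s, _, _, rfl⟩ := hb.exists_eq_pathCell hd
  exact not_nested_pathCell f b r s

lemma exists_mem_of_weakChainOf_eq (hb : IsInnerChain f b) (hb' : IsInnerChain f b')
    (h : weakChainOf f b α = weakChainOf f b' α') (hc : c ∈ b) :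
    ∃ d ∈ b', (d.1 = c.1 ∧ d.2 ≤ c.2) ∨ (d.2 = c.2 ∧ c.1 ≤ d.1) := by
  have hcmem : c ∈ weakChainOf f b' α' := h ▸ Multiset.mem_add.2 (.inl hc)
  obtain ⟨r, h₁, h₂, hcr⟩ := hb'.exists_eq_pathCell hcmem
  have hrank := hb'.rank_pathCell h₁ h₂
  rw [← hcr] at hrank
  have hfst : c.1 = pathFst f b' r := congrArg Prod.fst hcr
  have := hb.inner c hc
  rcases pathFst_cases f b' r with h | h | ⟨d, hd, h⟩
  · omega
  · omega
  · have := hb'.inner d hd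
    exact ⟨d, hd, by omega⟩

lemma subset_of_weakChainOf_eq (hb : IsInnerChain f b) (hb' : IsInnerChain f b')
    (h : weakChainOf f b α = weakChainOf f b' α') : b ⊆ b' := by
  intro c hc
  obtain ⟨d, hd, hcd⟩ := hb.exists_mem_of_weakChainOf_eq hb' h hc
  obtain ⟨e, he, hde⟩ := hb'.exists_mem_of_weakChainOf_eq hb h.symm hd
  suffices c = d from this ▸ hd
  obtain rfl | hne := eq_or_ne c e
  · ext <;> omega
  · have := hb.strict c hc e he hne
    omega

end IsInnerChain

variable (f) in
theorem weakChainOf_injective : Function.Injective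
    fun p : InnerChain f × (Fin (2 * f - 3) →₀ ℕ) ↦ weakChainOf f p.1.1 p.2 := by
  rintro ⟨⟨b, hb⟩, α⟩ ⟨⟨b', hb'⟩, α'⟩ h
  dsimp only at h
  obtain rfl : b = b' := (hb.subset_of_weakChainOf_eq hb' h).antisymm
    (hb'.subset_of_weakChainOf_eq hb h.symm)
  have hrank : (fun c : ℕ × ℕ ↦ c.1 + c.2) ∘ (fun k : Fin (2 * f - 3) ↦ pathCell f b (k + 1)) =
      fun k : Fin (2 * f - 3) ↦ (k : ℕ) + 1 := funext fun k ↦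
    hb.rank_pathCell (by omega) (by omega)
  have hmap := congrArg (Multiset.map fun c : ℕ × ℕ ↦ c.1 + c.2) (add_left_cancel h)
  rw [Multiset.map_map, Multiset.map_map, hrank] at hmap
  have hα := Multiset.map_injective (fun _ _ h ↦ Fin.ext (Nat.succ_injective h)) hmap
  rw [Multiset.toFinsupp.symm.injective hα]

end Path

/-! ### Complementary chains -/

section Complement

/-- The set of rows met by a set of cells. -/
def rows (b : Finset (ℕ × ℕ)) : Finset ℕ := b.image Prod.fst

/-- The set of columns met by a set of cells, shifted down by one so that for inner chains of a
matrix of size `f` both `rows` and `shiftedCols` are subsets of `{1, …, f - 3}`. -/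
def shiftedCols (b : Finset (ℕ × ℕ)) : Finset ℕ := b.image fun c ↦ c.2 - 1

namespace IsInnerChain

variable {f : ℕ} {b b' : Finset (ℕ × ℕ)}

lemma isWeakChain (hb : IsInnerChain f b) : IsWeakChain b.val := fun c hc d hd h ↦ by
  have := hb.strict c hc d hd (by rintro rfl; exact lt_irrefl _ h.1)
  omega

lemma injOn_fst (hb : IsInnerChain f b) : Set.InjOn Prod.fst (b : Set (ℕ × ℕ)) := by
  intro c hc d hd h
  by_contra hne
  have := hb.strict c hc d hd hne
  omega

lemma injOn_snd_sub_one (hb : IsInnerChain f b) :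
    Set.InjOn (fun c ↦ c.2 - 1) (b : Set (ℕ × ℕ)) := by
  intro c hc d hd h
  by_contra hne
  have := hb.strict c hc d hd hne
  have := hb.inner c hc
  have := hb.inner d hd
  simp only at h
  omega

lemma rows_subset (hb : IsInnerChain f b) : rows b ⊆ Finset.Icc 1 (f - 3) := by
  refine Finset.image_subset_iff.2 fun c hc ↦ Finset.mem_Icc.2 ?_
  have := hb.inner c hc
  omega

lemma shiftedCols_subset (hb : IsInnerChain f b) : shiftedCols b ⊆ Finset.Icc 1 (f - 3) := by
  refine Finset.image_subset_iff.2 fun c hc ↦ Finset.mem_Icc.2 ?_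
  have := hb.inner c hc
  omega

lemma card_rows (hb : IsInnerChain f b) : (rows b).card = b.card :=
  Finset.card_image_of_injOn hb.injOn_fst

lemma card_shiftedCols (hb : IsInnerChain f b) : (shiftedCols b).card = b.card :=
  Finset.card_image_of_injOn hb.injOn_snd_sub_one

lemma card_shiftedCols_filter_le (hb : IsInnerChain f b) (t : ℕ) :
    ((shiftedCols b).filter (· ≤ t)).card ≤ ((rows b).filter (· ≤ t)).card := by
  rw [shiftedCols, rows, Finset.filter_image, Finset.filter_image,
    Finset.card_image_of_injOn (hb.injOn_snd_sub_one.mono <| Finset.filter_subset _ _),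
    Finset.card_image_of_injOn (hb.injOn_fst.mono <| Finset.filter_subset _ _)]
  refine Finset.card_le_card fun c hc ↦ ?_
  rw [Finset.mem_filter] at hc ⊢
  have := hb.inner c hc.1
  exact ⟨hc.1, by omega⟩

lemma ext (hb : IsInnerChain f b) (hb' : IsInnerChain f b') (hrows : rows b = rows b')
    (hcols : shiftedCols b = shiftedCols b') : b = b' := by
  have map_fst {b : Finset (ℕ × ℕ)} (hb : IsInnerChain f b) :
      b.val.map Prod.fst = (rows b).val :=
    (Finset.image_val_of_injOn hb.injOn_fst).symm
  have map_snd {b : Finset (ℕ × ℕ)} (hb : IsInnerChain f b) :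
      b.val.map Prod.snd = (shiftedCols b).val.map (· + 1) := by
    rw [shiftedCols, Finset.image_val_of_injOn hb.injOn_snd_sub_one, Multiset.map_map]
    refine Multiset.map_congr rfl fun c hc ↦ ?_
    have := hb.inner c hc
    simp only [Function.comp_apply]
    omega
  refine Finset.val_injective (hb.isWeakChain.ext hb'.isWeakChain ?_ ?_)
  · rw [map_fst hb, map_fst hb', hrows]
  · rw [map_snd hb, map_snd hb', hcols]

end IsInnerChain

lemma orderEmbOfFin_le_orderEmbOfFin {α : Type*} [LinearOrder α] {I J : Finset α} {k : ℕ}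
    (hI : I.card = k) (hJ : J.card = k)
    (h : ∀ t, (J.filter (· ≤ t)).card ≤ (I.filter (· ≤ t)).card) (m : Fin k) :
    I.orderEmbOfFin hI m ≤ J.orderEmbOfFin hJ m := by
  by_contra! hlt
  have hJ_card : m + 1 ≤ (J.filter (· ≤ J.orderEmbOfFin hJ m)).card := by
    rw [← Fin.card_Iic m, ← Finset.card_map (J.orderEmbOfFin hJ).toEmbedding]
    refine Finset.card_le_card fun t ht ↦ ?_
    obtain ⟨a, ha, rfl⟩ := Finset.mem_map.1 ht
    exact Finset.mem_filter.2 ⟨J.orderEmbOfFin_mem hJ a,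
      (J.orderEmbOfFin hJ).monotone (Finset.mem_Iic.1 ha)⟩
  have hI_card : (I.filter (· ≤ J.orderEmbOfFin hJ m)).card ≤ m := by
    rw [← Fin.card_Iio m, ← Finset.card_map (I.orderEmbOfFin hI).toEmbedding]
    refine Finset.card_le_card fun t ht ↦ ?_
    obtain ⟨htI, hle⟩ := Finset.mem_filter.1 ht
    obtain ⟨a, rfl⟩ : t ∈ Set.range (I.orderEmbOfFin hI) := by rwa [I.range_orderEmbOfFin hI]
    exact Finset.mem_map_of_mem _
      (Finset.mem_Iio.2 ((I.orderEmbOfFin hI).lt_iff_lt.1 (hle.trans_lt hlt)))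
  exact absurd (hJ_card.trans ((h _).trans hI_card)) (by omega)

variable {f : ℕ}

lemma exists_innerChain_of_card_filter_le {I J : Finset ℕ} (hI : I ⊆ Finset.Icc 1 (f - 3))
    (hJ : J ⊆ Finset.Icc 1 (f - 3)) (hcard : I.card = J.card)
    (h : ∀ t, (J.filter (· ≤ t)).card ≤ (I.filter (· ≤ t)).card) :
    ∃ b : InnerChain f, rows b.1 = I ∧ shiftedCols b.1 = J := by
  set p := I.orderEmbOfFin hcard
  set q := J.orderEmbOfFin rfl
  have hpq : ∀ m, p m ≤ q m := orderEmbOfFin_le_orderEmbOfFin hcard rfl h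
  have hp_mem m : p m ∈ Finset.Icc 1 (f - 3) := hI (I.orderEmbOfFin_mem hcard m)
  have hq_mem m : q m ∈ Finset.Icc 1 (f - 3) := hJ (J.orderEmbOfFin_mem rfl m)
  refine ⟨⟨Finset.univ.image fun m ↦ (p m, q m + 1), ?_, ?_⟩, ?_, ?_⟩
  · intro c hc
    obtain ⟨m, _, rfl⟩ := Finset.mem_image.1 hc
    have := Finset.mem_Icc.1 (hp_mem m)
    have := Finset.mem_Icc.1 (hq_mem m)
    have := hpq m
    simp only
    omega
  · intro c hc d hd hne
    obtain ⟨m, _, rfl⟩ := Finset.mem_image.1 hc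
    obtain ⟨m', _, rfl⟩ := Finset.mem_image.1 hd
    simp only [add_lt_add_iff_right, OrderEmbedding.lt_iff_lt, and_self]
    exact lt_or_gt_of_ne (by rintro rfl; exact hne rfl)
  · rw [rows, Finset.image_image]
    exact Finset.image_orderEmbOfFin_univ I hcard
  · rw [shiftedCols, Finset.image_image]
    exact Finset.image_orderEmbOfFin_univ J rfl

lemma exists_complement (b : InnerChain f) : ∃ b' : InnerChain f,
    rows b'.1 = Finset.Icc 1 (f - 3) \ shiftedCols b.1 ∧
      shiftedCols b'.1 = Finset.Icc 1 (f - 3) \ rows b.1 := by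
  have hrows := b.2.rows_subset
  have hcols := b.2.shiftedCols_subset
  refine exists_innerChain_of_card_filter_le Finset.sdiff_subset Finset.sdiff_subset ?_ fun t ↦ ?_
  · rw [Finset.card_sdiff_of_subset hcols, Finset.card_sdiff_of_subset hrows, b.2.card_rows,
      b.2.card_shiftedCols]
  · have card_filter_sdiff {K : Finset ℕ} (hK : K ⊆ Finset.Icc 1 (f - 3)) :
        ((Finset.Icc 1 (f - 3) \ K).filter (· ≤ t)).card =
          ((Finset.Icc 1 (f - 3)).filter (· ≤ t)).card - (K.filter (· ≤ t)).card := by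
      rw [← Finset.card_sdiff_of_subset (Finset.filter_subset_filter _ hK)]
      congr 1
      ext
      simp only [Finset.mem_filter, Finset.mem_sdiff]
      tauto
    rw [card_filter_sdiff hrows, card_filter_sdiff hcols]
    exact Nat.sub_le_sub_left (b.2.card_shiftedCols_filter_le t) _

theorem two_mul_sum_card_innerChain (f : ℕ) :
    2 * ∑ b : InnerChain f, b.1.card = Fintype.card (InnerChain f) * (f - 3) := by
  choose compl hrows hcols using exists_complement (f := f)
  have compl_injective : Function.Injective compl := fun b b' h ↦ by
    refine Subtype.ext (b.2.ext b'.2 ?_ ?_)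
    · rw [← Finset.sdiff_sdiff_eq_self b.2.rows_subset, ← hcols, h, hcols,
        Finset.sdiff_sdiff_eq_self b'.2.rows_subset]
    · rw [← Finset.sdiff_sdiff_eq_self b.2.shiftedCols_subset, ← hrows, h, hrows,
        Finset.sdiff_sdiff_eq_self b'.2.shiftedCols_subset]
  have card_add_card b : b.1.card + (compl b).1.card = f - 3 := by
    rw [← (compl b).2.card_rows, hrows, ← b.2.card_shiftedCols, add_comm,
      Finset.card_sdiff_add_card_eq_card b.2.shiftedCols_subset, Nat.card_Icc, Nat.add_sub_cancel]
  have sum_compl : ∑ b, (compl b).1.card = ∑ b : InnerChain f, b.1.card :=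
    (Finite.injective_iff_bijective.1 compl_injective).sum_comp fun b : InnerChain f ↦ b.1.card
  calc 2 * ∑ b : InnerChain f, b.1.card
      = ∑ b : InnerChain f, (b.1.card + (compl b).1.card) := by
        rw [Finset.sum_add_distrib, sum_compl, two_mul]
    _ = Fintype.card (InnerChain f) * (f - 3) := by
        simp only [card_add_card, Finset.sum_const, Finset.card_univ, smul_eq_mul]

/-- The inner chain of maximal length, which generates the socle of `A` modulo the parameters. -/
def topChain (f : ℕ) : InnerChain f := ⟨(Finset.Icc 1 (f - 3)).image fun i ↦ (i, i + 1), by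
  constructor
  · intro c hc
    obtain ⟨i, hi, rfl⟩ := Finset.mem_image.1 hc
    rw [Finset.mem_Icc] at hi
    simp only
    omega
  · intro c hc d hd hne
    obtain ⟨i, _, rfl⟩ := Finset.mem_image.1 hc
    obtain ⟨j, _, rfl⟩ := Finset.mem_image.1 hd
    simp only [add_lt_add_iff_right, and_self]
    exact lt_or_gt_of_ne (by rintro rfl; exact hne rfl)⟩

lemma card_topChain (f : ℕ) : (topChain f).1.card = f - 3 := by
  simp only [topChain]
  rw [Finset.card_image_of_injective _ fun i j h ↦ congrArg Prod.fst h, Nat.card_Icc,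
    Nat.add_sub_cancel]

end Complement

/-! ### Combinations of chain monomials over the parameter ring -/

section Parameters

/-- The polynomial ring on parameters of rank `1, …, 2 f - 3`; the variable `k` stands for the
parameter of rank `k + 1`. -/
abbrev ParamRing (R : Type*) [CommRing R] (f : ℕ) := MvPolynomial (Fin (2 * f - 3)) R

variable {R : Type*} [CommRing R]

variable {A : Type*} [CommRing A] [Algebra R A] {x : ℕ × ℕ → A} {f : ℕ}

variable (R) in
lemma mem_span_cellProd (hx : Algebra.adjoin R (x '' cells f) = ⊤) (a : A) :
    a ∈ Submodule.span R (cellProd x '' {C | ∀ c ∈ C, c ∈ cells f}) := by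
  have ha : a ∈ Algebra.adjoin R (x '' cells f) := hx ▸ Algebra.mem_top
  rw [← Subalgebra.mem_toSubmodule, Algebra.adjoin_eq_span] at ha
  refine Submodule.span_mono (fun y hy ↦ ?_) ha
  induction hy using Submonoid.closure_induction with
  | mem y hy =>
    obtain ⟨c, hc, rfl⟩ := hy
    exact ⟨{c}, fun d hd ↦ Multiset.mem_singleton.1 hd ▸ hc, by simp [cellProd]⟩
  | one => exact ⟨0, by simp, cellProd_zero x⟩
  | mul y z _ _ hy hz =>
    obtain ⟨C, hC, rfl⟩ := hy
    obtain ⟨D, hD, rfl⟩ := hz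
    exact ⟨C + D, fun c hc ↦ (Multiset.mem_add.1 hc).elim (hC c) (hD c), cellProd_add x C D⟩

variable (R x f) in
/-- The substitution of the rank sums of `x` for the parameters. -/
def paramHom : ParamRing R f →ₐ[R] A := MvPolynomial.aeval fun k ↦ rankSum x f (k + 1)

lemma paramHom_X (k : Fin (2 * f - 3)) : paramHom R x f (.X k) = rankSum x f (k + 1) :=
  MvPolynomial.aeval_X _ _

variable (R x f) in
/-- The standard monomial `T ^ α x_b` attached to a pair `(b, α)`. -/
def stdMonomial (p : InnerChain f × (Fin (2 * f - 3) →₀ ℕ)) : A :=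
  paramHom R x f (.monomial p.2 1) * cellProd x p.1.1.val

/-- The degree of the standard monomial attached to a pair `(b, α)`. -/
def stdDegree (p : InnerChain f × (Fin (2 * f - 3) →₀ ℕ)) : ℕ := p.1.1.card + p.2.degree

variable (R x f) in
/-- The linear combination of the monomials of the inner chains with given coefficients in the
parameter ring. -/
def chainComb : (InnerChain f → ParamRing R f) →ₗ[R] A :=
  ∑ b, LinearMap.mulRight R (cellProd x b.1.val) ∘ₗ (paramHom R x f).toLinearMap ∘ₗ
    LinearMap.proj b

lemma chainComb_apply (s : InnerChain f → ParamRing R f) :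
    chainComb R x f s = ∑ b, paramHom R x f (s b) * cellProd x b.1.val := by
  simp [chainComb, LinearMap.sum_apply]

lemma chainComb_single_monomial (p : InnerChain f × (Fin (2 * f - 3) →₀ ℕ)) :
    chainComb R x f (Pi.single p.1 (.monomial p.2 1)) = stdMonomial R x f p := by
  rw [chainComb_apply, Finset.sum_eq_single p.1 (fun b _ hb ↦ ?_) (by simp)]
  · rw [Pi.single_eq_same, stdMonomial]
  · rw [Pi.single_eq_of_ne hb, map_zero, zero_mul]

lemma rankSum_mul_stdMonomial (p : InnerChain f × (Fin (2 * f - 3) →₀ ℕ)) (k : Fin (2 * f - 3)) :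
    rankSum x f (k + 1) * stdMonomial R x f p = stdMonomial R x f (p.1, p.2 + .single k 1) := by
  rw [stdMonomial, stdMonomial, ← paramHom_X (R := R), ← mul_assoc, ← map_mul, MvPolynomial.X,
    MvPolynomial.monomial_mul, one_mul, add_comm]

variable (R) in
theorem cellProd_mem_span_stdMonomial (hx : PluckerRel f x) {C : Multiset (ℕ × ℕ)}
    (hC : ∀ c ∈ C, c ∈ cells f) :
    cellProd x C ∈ Submodule.span R (stdMonomial R x f '' {p | stdDegree p = C.card}) := by
  let Q m := Submodule.span R (stdMonomial R x f '' {p | stdDegree p = m})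
  have hQ : IsStraighteningFiltration f x fun m ↦ (Q m).toAddSubgroup := by
    refine ⟨fun {m r a} hr₁ hr₂ ha ↦ ?_, fun b hb ↦ .inl ?_⟩
    · suffices Q m ≤ (Q (m + 1)).comap (LinearMap.mulLeft R (rankSum x f r)) from this ha
      rw [Submodule.span_le, Set.image_subset_iff]
      intro p hp
      obtain ⟨k, rfl⟩ : ∃ k : Fin (2 * f - 3), (k : ℕ) + 1 = r :=
        ⟨⟨r - 1, by omega⟩, Nat.sub_add_cancel hr₁⟩
      refine Submodule.subset_span ⟨_, ?_, (rankSum_mul_stdMonomial p k).symm⟩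
      simp only [Set.mem_ofPred_eq, stdDegree, map_add, Finsupp.degree_single] at hp ⊢
      rw [← hp, add_assoc]
    · exact Submodule.subset_span ⟨(⟨b, hb⟩, 0), by simp [stdDegree], by simp [stdMonomial]⟩
  exact hQ.cellProd_mem hx C hC

lemma finite_setOf_stdDegree_le (f n : ℕ) :
    {p : InnerChain f × (Fin (2 * f - 3) →₀ ℕ) | stdDegree p ≤ n}.Finite :=
  (Set.finite_univ.prod (Finsupp.finite_of_degree_le n)).subset fun _ hp ↦
    ⟨Set.mem_univ _, (Nat.le_add_left _ _).trans hp⟩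

variable (R f) in
-- The monomials of the weak chains are independent, lie in the span of the standard monomials, and
-- there are equally many of both in each degree.
theorem linearIndependent_stdMonomial_pluckerCoord :
    LinearIndependent R (stdMonomial R (pluckerCoord R) f) := by
  refine linearIndependent_of_mem_span_image_le stdDegree (finite_setOf_stdDegree_le f)
    (w := fun p ↦ cellProd (pluckerCoord R) (weakChainOf f p.1.1 p.2)) (fun p ↦ ?_) ?_
  · refine Submodule.span_mono (Set.image_mono fun q hq ↦ ?_) <| cellProd_mem_span_stdMonomial R
      (pluckerRel_pluckerCoord R f) fun c ↦ p.1.2.mem_cells_of_mem_weakChainOf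
    exact (hq.trans (card_weakChainOf f _ _)).le
  · exact linearIndependent_cellProd_pluckerCoord R (weakChainOf_injective f)
      (fun p ↦ p.1.2.isWeakChain_weakChainOf p.2)
      fun p c hc ↦ (mem_cells.1 (p.1.2.mem_cells_of_mem_weakChainOf hc)).1

variable (R f) in
theorem chainComb_pluckerCoord_injective : Function.Injective (chainComb R (pluckerCoord R) f) := by
  classical
  let B := (Pi.basis fun _ : InnerChain f ↦ MvPolynomial.basisMonomials (Fin (2 * f - 3)) R).reindex
    (Equiv.sigmaEquivProd _ _)
  have hB : chainComb R (pluckerCoord R) f ∘ B = stdMonomial R (pluckerCoord R) f := by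
    funext p
    simp [B, ← chainComb_single_monomial, Pi.basis_apply]
  refine LinearMap.injective_of_linearIndependent B.span_eq ?_
  rw [hB]
  exact linearIndependent_stdMonomial_pluckerCoord R f

theorem exists_isHomogeneous_chainComb_eq (hx : PluckerRel f x) {C : Multiset (ℕ × ℕ)}
    (hC : ∀ c ∈ C, c ∈ cells f) : ∃ s : InnerChain f → ParamRing R f,
      chainComb R x f s = cellProd x C ∧
        ∀ b, s b = 0 ∨ ∃ d, d + b.1.card = C.card ∧ (s b).IsHomogeneous d := by
  classical
  let K (b : InnerChain f) : Submodule R (ParamRing R f) :=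
    if b.1.card ≤ C.card then MvPolynomial.homogeneousSubmodule _ R (C.card - b.1.card) else ⊥
  let H : Submodule R (InnerChain f → ParamRing R f) := Submodule.pi Set.univ K
  have hH : Submodule.span R (stdMonomial R x f '' {p | stdDegree p = C.card}) ≤
      H.map (chainComb R x f) := by
    rw [Submodule.span_le, Set.image_subset_iff]
    intro p hp
    refine ⟨_, fun b _ ↦ ?_, chainComb_single_monomial p⟩
    obtain rfl | hb := eq_or_ne b p.1
    · simp only [Set.mem_ofPred_eq, stdDegree] at hp
      simp only [K, Pi.single_eq_same]
      rw [if_pos (by omega)]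
      exact MvPolynomial.isHomogeneous_monomial _ (by omega)
    · rw [Pi.single_eq_of_ne hb]
      exact Submodule.zero_mem _
  obtain ⟨s, hs, hsC⟩ := hH (cellProd_mem_span_stdMonomial R hx hC)
  refine ⟨s, hsC, fun b ↦ ?_⟩
  have hsb : s b ∈ K b := hs b trivial
  simp only [K] at hsb
  split_ifs at hsb with hb
  · exact .inr ⟨_, Nat.sub_add_cancel hb, hsb⟩
  · exact .inl hsb

theorem chainComb_surjective (hx : PluckerRel f x) (hgen : Algebra.adjoin R (x '' cells f) = ⊤) :
    Function.Surjective (chainComb R x f) := by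
  rw [← LinearMap.range_eq_top, ← top_le_iff]
  intro a _
  refine Submodule.span_le.2 ?_ (mem_span_cellProd R hgen a)
  rintro _ ⟨C, hC, rfl⟩
  obtain ⟨s, hs, _⟩ := exists_isHomogeneous_chainComb_eq (R := R) hx hC
  exact ⟨s, hs⟩

section Map

variable {R' A' : Type*} [CommRing R'] [CommRing A'] [Algebra R' A'] {x' : ℕ × ℕ → A'}
  {π : R →+* R'} {g : A →+* A'}

lemma map_cellProd (hg : ∀ c ∈ cells f, g (x c) = x' c) {C : Multiset (ℕ × ℕ)}
    (hC : ∀ c ∈ C, c ∈ cells f) : g (cellProd x C) = cellProd x' C := by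
  rw [cellProd, map_multiset_prod, Multiset.map_map]
  exact congrArg Multiset.prod (Multiset.map_congr rfl fun c hc ↦ hg c (hC c hc))

lemma map_paramHom (hπ : ∀ r, g (algebraMap R A r) = algebraMap R' A' (π r))
    (hg : ∀ c ∈ cells f, g (x c) = x' c) (s : ParamRing R f) :
    g (paramHom R x f s) = paramHom R' x' f (s.map π) := by
  have hrank r : g (rankSum x f r) = rankSum x' f r := by
    rw [rankSum, map_sum]
    exact Finset.sum_congr rfl fun c hc ↦ hg c (Finset.mem_filter.1 hc).1
  induction s using MvPolynomial.induction_on with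
  | C r => simp [paramHom, hπ]
  | add s t hs ht => rw [map_add, map_add, hs, ht, map_add, map_add]
  | mul_X s k hs =>
    rw [map_mul, map_mul, hs, paramHom_X, hrank, map_mul, map_mul, MvPolynomial.map_X, paramHom_X]

lemma map_chainComb (hπ : ∀ r, g (algebraMap R A r) = algebraMap R' A' (π r))
    (hg : ∀ c ∈ cells f, g (x c) = x' c) (s : InnerChain f → ParamRing R f) :
    g (chainComb R x f s) = chainComb R' x' f fun b ↦ (s b).map π := by
  simp only [chainComb_apply, map_sum, map_mul, map_paramHom hπ hg]
  exact Finset.sum_congr rfl fun b _ ↦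
    congrArg _ (map_cellProd hg fun c hc ↦ b.2.subset_cells hc)

end Map

end Parameters

/-! ### The Pfaffian ring as a free module over the parameters -/

section PfaffianRing

variable (R : Type u) [CommRing R] (f : ℕ)

/-- The ring `A = R[X] / Pf₄(X)`. -/
def PfaffianRing : Type u := MvPolynomial (P2 f) R ⧸ Pf4 R f

instance : CommRing (PfaffianRing R f) := inferInstanceAs (CommRing (_ ⧸ Pf4 R f))

instance {R₀ : Type*} [CommRing R₀] [Algebra R₀ R] : Algebra R₀ (PfaffianRing R f) :=
  inferInstanceAs (Algebra R₀ (_ ⧸ Pf4 R f))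

instance {R₀ : Type*} [CommRing R₀] [Algebra R₀ R] : IsScalarTower R₀ R (PfaffianRing R f) :=
  inferInstanceAs (IsScalarTower R₀ R (_ ⧸ Pf4 R f))

/-- The projection from the polynomial ring to the Pfaffian ring. -/
def toPfaffianRing : MvPolynomial (P2 f) R →ₐ[R] PfaffianRing R f := Ideal.Quotient.mkₐ R (Pf4 R f)

/-- The classes of the variables `X_{i,j}`, `i < j`, extended by zero to all pairs of natural
numbers. -/
def entry (c : ℕ × ℕ) : PfaffianRing R f :=
  if h : c.1 < c.2 ∧ c.2 < f then
    toPfaffianRing R f (.X ⟨(⟨c.1, h.1.trans h.2⟩, ⟨c.2, h.2⟩), h.1⟩) else 0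

variable {R f} in
lemma xv_of_lt {i j : Fin f} (h : i < j) : xv R f i j = .X ⟨(i, j), h⟩ := dif_pos h

variable {R f} in
lemma entry_of_lt {i j : Fin f} (h : i < j) :
    entry R f (i, j) = toPfaffianRing R f (xv R f i j) := by
  rw [entry, dif_pos ⟨h, j.2⟩, xv_of_lt h]

theorem pluckerRel_entry : PluckerRel f (entry R f) := by
  intro i j k l hij hjk hkl hl
  obtain ⟨l, rfl⟩ : ∃ l' : Fin f, (l' : ℕ) = l := ⟨⟨l, hl⟩, rfl⟩
  obtain ⟨k, rfl⟩ : ∃ k' : Fin f, (k' : ℕ) = k := ⟨⟨k, hkl.trans l.2⟩, rfl⟩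
  obtain ⟨j, rfl⟩ : ∃ j' : Fin f, (j' : ℕ) = j := ⟨⟨j, hjk.trans k.2⟩, rfl⟩
  obtain ⟨i, rfl⟩ : ∃ i' : Fin f, (i' : ℕ) = i := ⟨⟨i, hij.trans j.2⟩, rfl⟩
  have hpf : toPfaffianRing R f (pf4 R f i j k l) = 0 :=
    Ideal.Quotient.eq_zero_iff_mem.2 (Ideal.subset_span ⟨i, j, k, l, hij, hjk, hkl, rfl⟩)
  simp only [pf4, map_add, map_sub, map_mul] at hpf
  rw [← entry_of_lt hij, ← entry_of_lt hkl, ← entry_of_lt (hij.trans hjk),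
    ← entry_of_lt (hjk.trans hkl), ← entry_of_lt (hij.trans (hjk.trans hkl)),
    ← entry_of_lt hjk] at hpf
  linear_combination hpf

theorem adjoin_entry : Algebra.adjoin R (entry R f '' cells f) = ⊤ := by
  have hentry : Set.range (fun p : P2 f ↦ toPfaffianRing R f (.X p)) ⊆
      entry R f '' cells f := by
    rintro _ ⟨p, rfl⟩
    exact ⟨(p.1.1, p.1.2), mem_cells.2 ⟨p.2, p.1.2.2⟩, by rw [entry_of_lt p.2, xv_of_lt p.2]⟩
  refine top_le_iff.1 (le_trans ?_ (Algebra.adjoin_mono hentry))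
  rw [Set.range_comp', Algebra.adjoin_image, MvPolynomial.adjoin_range_X, Algebra.map_top,
    (AlgHom.range_eq_top (toPfaffianRing R f)).2
      (Ideal.Quotient.mkₐ_surjective R (Pf4 R f))]

variable {R f}

/-- The universal property of the Pfaffian ring: a family satisfying the Pfaffian relations
determines a homomorphism. -/
def liftEntry {A : Type*} [CommRing A] [Algebra R A] {x : ℕ × ℕ → A} (hx : PluckerRel f x) :
    PfaffianRing R f →ₐ[R] A :=
  Ideal.Quotient.liftₐ (Pf4 R f) (MvPolynomial.aeval fun p : P2 f ↦ x (p.1.1, p.1.2))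
    fun a ha ↦ by
      suffices Pf4 R f ≤ RingHom.ker
        (MvPolynomial.aeval (R := R) fun p : P2 f ↦ x (p.1.1, p.1.2)) from this ha
      refine Ideal.span_le.2 ?_
      rintro _ ⟨i, j, k, l, hij, hjk, hkl, rfl⟩
      rw [SetLike.mem_coe, RingHom.mem_ker, pf4, xv_of_lt hij, xv_of_lt hkl,
        xv_of_lt (hij.trans hjk), xv_of_lt (hjk.trans hkl), xv_of_lt (hij.trans (hjk.trans hkl)),
        xv_of_lt hjk]
      simp only [map_add, map_sub, map_mul, MvPolynomial.aeval_X]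
      linear_combination hx i j k l hij hjk hkl l.2

lemma liftEntry_entry {A : Type*} [CommRing A] [Algebra R A] {x : ℕ × ℕ → A}
    (hx : PluckerRel f x) {c : ℕ × ℕ} (hc : c ∈ cells f) :
    liftEntry hx (entry R f c) = x c := by
  rw [entry, dif_pos (mem_cells.1 hc)]
  exact MvPolynomial.aeval_X _ _

variable (R f) in
/-- The homomorphism to the polynomial ring of a `2 × f` matrix sending the generic alternating
matrix to the matrix of `2 × 2` minors. -/
def toMinors : PfaffianRing R f →ₐ[R] MvPolynomial (ℕ ⊕ ℕ) R :=
  liftEntry (pluckerRel_pluckerCoord R f)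

lemma toMinors_entry {c : ℕ × ℕ} (hc : c ∈ cells f) :
    toMinors R f (entry R f c) = pluckerCoord R c := liftEntry_entry _ hc

lemma toMinors_chainComb (s : InnerChain f → ParamRing R f) :
    toMinors R f (chainComb R (entry R f) f s) = chainComb R (pluckerCoord R) f s := by
  have h := map_chainComb (x := entry R f) (x' := pluckerCoord R) (π := RingHom.id R)
    (g := (toMinors R f).toRingHom) (toMinors R f).commutes (fun _ ↦ toMinors_entry) s
  simp only [MvPolynomial.map_id] at h
  exact h

variable (R f) in
theorem chainComb_entry_bijective : Function.Bijective (chainComb R (entry R f) f) := by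
  refine ⟨.of_comp (f := toMinors R f) ?_,
    chainComb_surjective (pluckerRel_entry R f) (adjoin_entry R f)⟩
  convert chainComb_pluckerCoord_injective R f
  exact funext toMinors_chainComb

variable (R f) in
theorem toMinors_injective : Function.Injective (toMinors R f) := by
  refine .of_comp_right (g := chainComb R (entry R f) f) ?_ (chainComb_entry_bijective R f).2
  convert chainComb_pluckerCoord_injective R f
  exact funext toMinors_chainComb

instance [IsDomain R] : IsDomain (PfaffianRing R f) :=
  (toMinors_injective R f).isDomain (toMinors R f).toRingHom

/-- The Pfaffian ring as an algebra over the parameter ring: the parameters act by the rank sums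
of the entries. -/
instance : Algebra (ParamRing R f) (PfaffianRing R f) :=
  (paramHom R (entry R f) f).toRingHom.toAlgebra

lemma algebraMap_param (s : ParamRing R f) :
    algebraMap (ParamRing R f) (PfaffianRing R f) s = paramHom R (entry R f) f s := rfl

lemma param_smul_def (s : ParamRing R f) (a : PfaffianRing R f) :
    s • a = paramHom R (entry R f) f s * a := rfl

variable (R f) in
/-- The monomials of the inner chains as a basis of the Pfaffian ring over the parameters. -/
def chainBasis : Module.Basis (InnerChain f) (ParamRing R f) (PfaffianRing R f) :=
  .ofEquivFun <| .symm <| .ofBijective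
    { toFun := chainComb R (entry R f) f
      map_add' := map_add _
      map_smul' := fun t s ↦ by
        simp only [chainComb_apply, Pi.smul_apply, smul_eq_mul, map_mul, RingHom.id_apply,
          param_smul_def, Finset.mul_sum, mul_assoc] }
    (chainComb_entry_bijective R f)

lemma chainBasis_repr_chainComb (s : InnerChain f → ParamRing R f) :
    (chainBasis R f).repr (chainComb R (entry R f) f s) = s :=
  LinearEquiv.symm_apply_apply (LinearEquiv.ofBijective _ (chainComb_entry_bijective R f)) s

lemma chainComb_chainBasis_repr (a : PfaffianRing R f) :
    chainComb R (entry R f) f ((chainBasis R f).repr a) = a :=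
  (LinearEquiv.ofBijective _ (chainComb_entry_bijective R f)).apply_symm_apply a

lemma chainBasis_apply (b : InnerChain f) :
    chainBasis R f b = cellProd (entry R f) b.1.val := by
  classical
  rw [chainBasis, Module.Basis.coe_ofEquivFun]
  simp [chainComb_apply, Pi.single_apply]

theorem isHomogeneous_chainBasis_repr_cellProd {C : Multiset (ℕ × ℕ)} (hC : ∀ c ∈ C, c ∈ cells f)
    (b : InnerChain f) : (chainBasis R f).repr (cellProd (entry R f) C) b = 0 ∨
      ∃ d, d + b.1.card = C.card ∧
        ((chainBasis R f).repr (cellProd (entry R f) C) b).IsHomogeneous d := by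
  obtain ⟨s, hsC, hs⟩ := exists_isHomogeneous_chainComb_eq (R := R) (pluckerRel_entry R f) hC
  rw [← hsC, chainBasis_repr_chainComb]
  exact hs b

instance : Module.Free (ParamRing R f) (PfaffianRing R f) := .of_basis (chainBasis R f)

instance : Module.Finite (ParamRing R f) (PfaffianRing R f) := .of_basis (chainBasis R f)

end PfaffianRing

/-! ### Perfectness of the trace form -/

section GramMatrix

variable {S M N ι : Type*} [CommRing S] [AddCommGroup M] [Module S M] [AddCommGroup N] [Module S N]
  [Fintype ι] [DecidableEq ι]

theorem isPerfPair_of_isUnit_det_toMatrix₂ (B : Module.Basis ι S M) (C : Module.Basis ι S N)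
    {p : M →ₗ[S] N →ₗ[S] S} (hp : IsUnit (LinearMap.toMatrix₂ B C p).det) : p.IsPerfPair := by
  have : Module.Free S N := .of_basis C
  have : Module.Finite S N := .of_basis C
  have hmatrix : LinearMap.toMatrix B C.dualBasis p = (LinearMap.toMatrix₂ B C p).transpose := by
    ext i j
    simp [LinearMap.toMatrix_apply, LinearMap.toMatrix₂_apply]
  have hdet : IsUnit (LinearMap.toMatrix B C.dualBasis p).det := by
    rwa [hmatrix, Matrix.det_transpose]
  exact .of_bijective p (LinearEquiv.ofIsUnitDet hdet).bijective

variable {A : Type*} [CommRing A] [Algebra S A]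

/-- The pairing `(a, c) ↦ σ (a c)` on an algebra attached to a linear functional `σ`. -/
abbrev mulPairing (σ : A →ₗ[S] S) : A →ₗ[S] A →ₗ[S] S := (LinearMap.mul S A).compr₂ σ

theorem det_toMatrix₂_mulPairing_ne_zero [IsDomain S] [IsDomain A] (B : Module.Basis ι S A)
    {σ : A →ₗ[S] S} (hσ : σ ≠ 0) : (LinearMap.toMatrix₂ B B (mulPairing σ)).det ≠ 0 := by
  have : Module.Finite S A := .of_basis B
  rw [← LinearMap.separatingLeft_iff_det_ne_zero]
  intro a ha
  by_contra ha₀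
  obtain ⟨s, hs, c, hc⟩ := (Algebra.IsIntegral.isIntegral (R := S) a).isAlgebraic.exists_nonzero_dvd
    (mem_nonZeroDivisors_of_ne_zero ha₀)
  refine hσ (LinearMap.ext fun d ↦ (smul_eq_zero_iff_right hs).1 ?_)
  calc s • σ d = σ (a * (c * d)) := by rw [← map_smul, Algebra.smul_def, hc, mul_assoc]
    _ = 0 := ha _

end GramMatrix

section Trace

variable (R : Type u) [CommRing R] (f : ℕ)

/-- The trace of the Pfaffian ring over the parameters: the coordinate of the chain monomial of
highest degree. -/
def chainTrace : PfaffianRing R f →ₗ[ParamRing R f] ParamRing R f :=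
  (chainBasis R f).coord (topChain f)

/-- The matrix of the trace form in the basis of chain monomials. -/
def gramMatrix : Matrix (InnerChain f) (InnerChain f) (ParamRing R f) :=
  LinearMap.toMatrix₂ (chainBasis R f) (chainBasis R f) (mulPairing (chainTrace R f))

lemma gramMatrix_apply (b c : InnerChain f) : gramMatrix R f b c =
    (chainBasis R f).repr (cellProd (entry R f) (b.1.val + c.1.val)) (topChain f) := by
  rw [gramMatrix, LinearMap.toMatrix₂_apply, cellProd_add, ← chainBasis_apply, ← chainBasis_apply]
  rfl

variable {R f} in
lemma mem_cells_of_mem_val_add_val {b c : InnerChain f} {e : ℕ × ℕ} (he : e ∈ b.1.val + c.1.val) :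
    e ∈ cells f :=
  (Multiset.mem_add.1 he).elim (fun h ↦ b.2.subset_cells h) fun h ↦ c.2.subset_cells h

lemma isHomogeneous_gramMatrix (b c : InnerChain f) : gramMatrix R f b c = 0 ∨
    ∃ d, d + (f - 3) = b.1.card + c.1.card ∧ (gramMatrix R f b c).IsHomogeneous d := by
  simpa only [← gramMatrix_apply, card_topChain, Multiset.card_add, Finset.card_val] using
    isHomogeneous_chainBasis_repr_cellProd (R := R)
      (fun _ ↦ mem_cells_of_mem_val_add_val (b := b) (c := c)) (topChain f)

theorem isHomogeneous_det_gramMatrix : (gramMatrix R f).det.IsHomogeneous 0 := by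
  rw [← MvPolynomial.mem_homogeneousSubmodule, Matrix.det_apply]
  refine Submodule.sum_mem _ fun τ _ ↦ Submodule.smul_of_tower_mem _ (Equiv.Perm.sign τ) ?_
  rw [MvPolynomial.mem_homogeneousSubmodule]
  by_cases hzero : ∃ i, gramMatrix R f (τ i) i = 0
  · obtain ⟨i, hi⟩ := hzero
    rw [Finset.prod_eq_zero (f := fun i ↦ gramMatrix R f (τ i) i) (Finset.mem_univ i) hi]
    exact MvPolynomial.isHomogeneous_zero _ _ _
  · push Not at hzero
    choose d hd hhom using fun i ↦ (isHomogeneous_gramMatrix R f (τ i) i).resolve_left (hzero i)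
    have hsum : ∑ i, d i + Fintype.card (InnerChain f) * (f - 3) =
        2 * ∑ b : InnerChain f, b.1.card := by
      calc ∑ i, d i + Fintype.card (InnerChain f) * (f - 3)
          = ∑ i, (d i + (f - 3)) := by simp [Finset.sum_add_distrib]
        _ = ∑ i, ((τ i).1.card + i.1.card) := Finset.sum_congr rfl fun i _ ↦ hd i
        _ = 2 * ∑ b : InnerChain f, b.1.card := by
          rw [Finset.sum_add_distrib, Equiv.sum_comp τ fun b : InnerChain f ↦ b.1.card, two_mul]
    have hd₀ : ∑ i, d i = 0 := by rw [two_mul_sum_card_innerChain] at hsum; omega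
    exact hd₀ ▸ .prod _ _ _ fun i _ ↦ hhom i

theorem chainTrace_ne_zero [Nontrivial R] : chainTrace R f ≠ 0 := fun h ↦ by
  simpa [chainTrace] using LinearMap.congr_fun h (chainBasis R f (topChain f))

variable {R} {f} in
lemma map_gramMatrix (R' : Type u) [CommRing R'] [Algebra R R'] :
    (gramMatrix R f).map (MvPolynomial.map (algebraMap R R')) = gramMatrix R' f := by
  ext1 b c
  let g : PfaffianRing R f →ₐ[R] PfaffianRing R' f := liftEntry (pluckerRel_entry R' f)
  have hg : ∀ c ∈ cells f, g.toRingHom (entry R f c) = entry R' f c :=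
    fun c hc ↦ liftEntry_entry _ hc
  have halg r : g.toRingHom (algebraMap R _ r) =
      algebraMap R' (PfaffianRing R' f) (algebraMap R R' r) :=
    (g.commutes r).trans (IsScalarTower.algebraMap_apply R R' (PfaffianRing R' f) r)
  have hC e (he : e ∈ b.1.val + c.1.val) : e ∈ cells f := mem_cells_of_mem_val_add_val he
  rw [Matrix.map_apply, gramMatrix_apply, gramMatrix_apply, ← map_cellProd hg hC,
    ← chainComb_chainBasis_repr (cellProd (entry R f) (b.1.val + c.1.val)), map_chainComb halg hg,
    chainBasis_repr_chainComb, chainBasis_repr_chainComb]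

-- The determinant is constant, so it is enough to see that it does not vanish modulo any maximal
-- ideal of the ring of coefficients.
theorem isUnit_det_gramMatrix : IsUnit (gramMatrix R f).det := by
  obtain ⟨δ, hδ⟩ : ∃ δ, (gramMatrix R f).det = .C δ :=
    ⟨_, MvPolynomial.totalDegree_eq_zero_iff_eq_C.1
      (Nat.le_zero.1 (isHomogeneous_det_gramMatrix R f).totalDegree_le)⟩
  rw [hδ]
  refine IsUnit.map _ ?_
  by_contra hu
  obtain ⟨m, hm, hδm⟩ := exists_max_ideal_of_mem_nonunits hu
  have : IsDomain (R ⧸ m) := Ideal.Quotient.isDomain m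
  refine det_toMatrix₂_mulPairing_ne_zero (chainBasis (R ⧸ m) f) (chainTrace_ne_zero _ f) ?_
  rw [← gramMatrix, ← map_gramMatrix (R := R) (R ⧸ m), ← RingHom.mapMatrix_apply,
    ← RingHom.map_det, hδ, MvPolynomial.map_C, Ideal.Quotient.algebraMap_eq,
    Ideal.Quotient.eq_zero_iff_mem.2 hδm, map_zero]

theorem isPerfPair_mulPairing_chainTrace : (mulPairing (chainTrace R f)).IsPerfPair :=
  isPerfPair_of_isUnit_det_toMatrix₂ _ _ (isUnit_det_gramMatrix R f)

end Trace

/-! ### The column module -/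

section Columns

variable (R : Type u) [CommRing R] (f : ℕ)

/-- The entries of the generic alternating matrix, extended by zero to all pairs of natural
numbers. -/
def altEntry (i j : ℕ) : PfaffianRing R f := entry R f (i, j) - entry R f (j, i)

/-- The columns of the generic alternating matrix, extended by zero to all natural numbers. -/
def column (j : ℕ) : Fin f → PfaffianRing R f := fun i ↦ altEntry R f i j

/-- The image of the generic alternating matrix, as the span of its columns. -/
def columnModule : Submodule (PfaffianRing R f) (Fin f → PfaffianRing R f) :=
  .span _ (Set.range fun j : Fin f ↦ column R f j)

variable {R f}

lemma entry_of_notMem {c : ℕ × ℕ} (hc : c ∉ cells f) : entry R f c = 0 :=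
  dif_neg (hc ∘ mem_cells.2)

lemma altEntry_of_le {i j : ℕ} (h : i ≤ j) : altEntry R f i j = entry R f (i, j) := by
  rw [altEntry, entry_of_notMem (c := (j, i)) (by rw [mem_cells]; omega), sub_zero]

lemma altEntry_of_ge {i j : ℕ} (h : j ≤ i) : altEntry R f i j = -entry R f (j, i) := by
  rw [altEntry, entry_of_notMem (c := (i, j)) (by rw [mem_cells]; omega), zero_sub]

lemma altEntry_self (i : ℕ) : altEntry R f i i = 0 := sub_self _

lemma XA_apply (i j : Fin f) : XA R f i j = altEntry R f i j := by
  rcases lt_trichotomy i j with h | rfl | h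
  · rw [altEntry_of_le h.le, entry_of_lt h]
    rfl
  · rw [altEntry_self, XA, xv, dif_neg (lt_irrefl i), dif_neg (lt_irrefl i)]
    exact map_zero (toPfaffianRing R f)
  · rw [altEntry_of_ge h.le, entry_of_lt h, xv_of_lt h, XA, xv, dif_neg h.not_gt, dif_pos h]
    exact map_neg (toPfaffianRing R f) _

variable (R f) in
theorem NA_eq_columnModule : NA R f = columnModule R f := by
  refine (Matrix.range_mulVecLin _).trans ?_
  rw [columnModule]
  congr 2
  funext j i
  exact XA_apply i j

lemma column_mem_columnModule {j : ℕ} (hj : j < f) : column R f j ∈ columnModule R f :=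
  Submodule.subset_span ⟨⟨j, hj⟩, rfl⟩

lemma toMinors_altEntry (i j : Fin f) :
    toMinors R f (altEntry R f i j) = pluckerCoord R (i, j) := by
  rcases lt_trichotomy (i : ℕ) j with h | h | h
  · rw [altEntry_of_le h.le, toMinors_entry (mem_cells.2 ⟨h, j.2⟩)]
  · rw [h, altEntry_self, map_zero, pluckerCoord]
    ring
  · rw [altEntry_of_ge h.le, map_neg, toMinors_entry (mem_cells.2 ⟨h, i.2⟩)]
    simp only [pluckerCoord]
    ring

theorem altEntry_smul_column (a b c : Fin f) :
    altEntry R f a b • column R f c - altEntry R f a c • column R f b +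
      altEntry R f b c • column R f a = 0 := by
  funext e
  apply toMinors_injective R f
  simp only [column, Pi.add_apply, Pi.sub_apply, Pi.smul_apply, smul_eq_mul, map_add, map_sub,
    map_mul, toMinors_altEntry, pluckerCoord, Pi.zero_apply, map_zero]
  ring

theorem altEntry_smul_of_mem {v : Fin f → PfaffianRing R f} (hv : v ∈ columnModule R f)
    (a b : Fin f) :
    altEntry R f a b • v - v a • column R f b + v b • column R f a = 0 := by
  simp only [funext_iff, Pi.add_apply, Pi.sub_apply, Pi.smul_apply, smul_eq_mul, Pi.zero_apply]
  induction hv using Submodule.span_induction with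
  | mem v hv =>
    obtain ⟨c, rfl⟩ := hv
    exact congrFun (altEntry_smul_column a b c)
  | zero => simp
  | add v w _ _ hv hw =>
    intro e
    simp only [Pi.add_apply]
    linear_combination hv e + hw e
  | smul r v _ hv =>
    intro e
    simp only [Pi.smul_apply, smul_eq_mul]
    linear_combination r * hv e

end Columns

/-! ### Divisibility by a variable -/

section Divisibility

variable {R σ : Type*} [CommRing R] {i j : σ}

lemma X_dvd_of_X_dvd_X_mul (hij : i ≠ j) {p : MvPolynomial σ R}
    (h : MvPolynomial.X i ∣ MvPolynomial.X j * p) : MvPolynomial.X i ∣ p := by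
  classical
  rw [MvPolynomial.X_dvd_iff_modMonomial_eq_zero] at h ⊢
  ext m
  have hm := congrArg (MvPolynomial.coeff (Finsupp.single j 1 + m)) h
  by_cases hi : Finsupp.single i 1 ≤ m
  · rw [MvPolynomial.coeff_modMonomial_of_le _ hi, MvPolynomial.coeff_zero]
  · have hi' : ¬ Finsupp.single i 1 ≤ Finsupp.single j 1 + m := by
      simpa [hij, Finsupp.single_apply, hij.symm] using hi
    rwa [MvPolynomial.coeff_modMonomial_of_not_le _ hi', MvPolynomial.coeff_X_mul,
      MvPolynomial.coeff_zero, ← MvPolynomial.coeff_modMonomial_of_not_le _ hi] at hm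

variable {M : Type*} [AddCommGroup M] [Module (MvPolynomial σ R) M]
  [Module.Free (MvPolynomial σ R) M]

theorem isSMulRegular_X : IsSMulRegular M (MvPolynomial.X i : MvPolynomial σ R) :=
  Module.Flat.isSMulRegular_of_nonZeroDivisors MvPolynomial.isRegular_X.mem_nonZeroDivisors

theorem exists_eq_X_smul_of_X_smul_eq [Module.Finite (MvPolynomial σ R) M] (hij : i ≠ j) {a b : M}
    (h : (MvPolynomial.X i : MvPolynomial σ R) • a = (MvPolynomial.X j : MvPolynomial σ R) • b) :
    ∃ t : M, b = (MvPolynomial.X i : MvPolynomial σ R) • t := by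
  let B := Module.Free.chooseBasis (MvPolynomial σ R) M
  have hdvd k : MvPolynomial.X i ∣ B.repr b k := X_dvd_of_X_dvd_X_mul hij
    ⟨B.repr a k, by simpa using (congrArg (B.repr · k) h).symm⟩
  choose t ht using hdvd
  refine ⟨∑ k, t k • B k, ?_⟩
  simp only [Finset.smul_sum, smul_smul, ← ht]
  exact (B.sum_repr b).symm

end Divisibility

/-! ### Removing the last row and column -/

section DropLast

variable (R : Type u) [CommRing R] (f : ℕ)

instance : IsScalarTower R (ParamRing R f) (PfaffianRing R f) :=
  .of_algebraMap_eq fun r ↦ ((paramHom R (entry R f) f).commutes r).symm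

lemma pluckerRel_succ_entry : PluckerRel (f + 1) (entry R f) := by
  intro i j k l hij hjk hkl hl
  obtain hl | rfl := Nat.lt_succ_iff_lt_or_eq.1 hl
  · exact pluckerRel_entry R f i j k l hij hjk hkl hl
  · have hzero (i : ℕ) : entry R l (i, l) = 0 := entry_of_notMem (by simp [mem_cells])
    simp only [hzero, zero_mul, mul_zero, sub_zero]

/-- Setting the last row and column of the generic alternating matrix to zero. -/
def dropLast : PfaffianRing R (f + 1) →ₐ[R] PfaffianRing R f :=
  liftEntry (pluckerRel_succ_entry R f)

variable {R f}

lemma cells_subset_cells_succ : cells f ⊆ cells (f + 1) := fun c hc ↦ by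
  rw [mem_cells] at hc ⊢; omega

lemma dropLast_entry (c : ℕ × ℕ) : dropLast R f (entry R (f + 1) c) = entry R f c := by
  by_cases hc : c ∈ cells (f + 1)
  · exact liftEntry_entry _ hc
  · rw [entry_of_notMem hc, map_zero, entry_of_notMem fun h ↦ hc (cells_subset_cells_succ h)]

lemma dropLast_apply_last {v : Fin (f + 1) → PfaffianRing R (f + 1)}
    (hv : v ∈ columnModule R (f + 1)) : dropLast R f (v (Fin.last f)) = 0 := by
  induction hv using Submodule.span_induction with
  | mem v hv =>
    obtain ⟨j, rfl⟩ := hv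
    simp only [column, Fin.val_last]
    rw [altEntry_of_ge (by omega), map_neg, dropLast_entry,
      entry_of_notMem (by simp [mem_cells]), neg_zero]
  | zero => exact map_zero _
  | add v w _ _ hv hw => rw [Pi.add_apply, map_add, hv, hw, add_zero]
  | smul r v _ hv => rw [Pi.smul_apply, smul_eq_mul, map_mul, hv, mul_zero]

lemma rankSum_succ_entry (r : ℕ) : rankSum (entry R f) (f + 1) r = rankSum (entry R f) f r := by
  refine (Finset.sum_subset (Finset.filter_subset_filter _ cells_subset_cells_succ) ?_).symm
  intro c hc hc'
  exact entry_of_notMem fun h ↦ hc' (Finset.mem_filter.2 ⟨h, (Finset.mem_filter.1 hc).2⟩)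

variable (R f) in
/-- The inclusion of the parameters of rank at most `2 f - 3` into those of the next size. -/
def liftParam : ParamRing R f →ₐ[R] ParamRing R (f + 1) :=
  MvPolynomial.rename (Fin.castLE (by omega))

lemma dropLast_liftParam (s : ParamRing R f) :
    dropLast R f (algebraMap _ _ (liftParam R f s)) = algebraMap _ _ s := by
  have h := map_paramHom (x := entry R (f + 1)) (x' := entry R f) (π := RingHom.id R)
    (g := (dropLast R f).toRingHom) (dropLast R f).commutes (fun c _ ↦ dropLast_entry c)
    (liftParam R f s)
  refine h.trans ?_
  rw [MvPolynomial.map_id, liftParam, paramHom, MvPolynomial.aeval_rename]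
  exact congrArg (MvPolynomial.aeval · s) (funext fun k ↦ rankSum_succ_entry _)

lemma IsInnerChain.succ {b : Finset (ℕ × ℕ)} (hb : IsInnerChain f b) : IsInnerChain (f + 1) b :=
  ⟨fun c hc ↦ by have := hb.inner c hc; omega, hb.strict⟩

variable (R f) in
/-- The lift along `dropLast` that keeps the coefficients and the chains of a combination of chain
monomials. -/
def liftComb : (InnerChain f → ParamRing R f) →ₗ[R] PfaffianRing R (f + 1) :=
  ∑ b, (LinearMap.toSpanSingleton (ParamRing R (f + 1)) _
    (cellProd (entry R (f + 1)) b.1.val)).restrictScalars R ∘ₗ (liftParam R f).toLinearMap ∘ₗ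
      LinearMap.proj b

lemma liftComb_apply (s : InnerChain f → ParamRing R f) :
    liftComb R f s = ∑ b, liftParam R f (s b) • cellProd (entry R (f + 1)) b.1.val := by
  simp [liftComb, LinearMap.sum_apply]

lemma dropLast_liftComb (s : InnerChain f → ParamRing R f) :
    dropLast R f (liftComb R f s) = chainComb R (entry R f) f s := by
  simp only [liftComb_apply, chainComb_apply, map_sum, Algebra.smul_def, map_mul,
    dropLast_liftParam]
  exact Finset.sum_congr rfl fun b _ ↦ congrArg _ <|
    map_cellProd (g := (dropLast R f).toRingHom) (fun c _ ↦ dropLast_entry c)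
      fun c hc ↦ b.2.succ.subset_cells hc

end DropLast

/-! ### Generators of the column module over the parameters -/

section LastParameters

variable {R : Type u} [CommRing R] {n : ℕ}

variable (n) in
/-- The parameter of largest rank, which acts as the entry `(n + 2, n + 3)`. -/
def lastParam : Fin (2 * (n + 4) - 3) := ⟨2 * n + 4, by omega⟩

variable (n) in
/-- The parameter of second largest rank, which acts as the entry `(n + 1, n + 3)`. -/
def penultParam : Fin (2 * (n + 4) - 3) := ⟨2 * n + 3, by omega⟩

lemma rankSum_eq_of_forall {A : Type*} [CommRing A] (x : ℕ × ℕ → A) {f r : ℕ} {c : ℕ × ℕ}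
    (hc : ∀ d, d ∈ cells f ∧ d.1 + d.2 = r ↔ d = c) : rankSum x f r = x c := by
  have hfilter : (cells f).filter (fun d ↦ d.1 + d.2 = r) = {c} := by
    ext d
    rw [Finset.mem_filter, hc, Finset.mem_singleton]
  rw [rankSum, hfilter, Finset.sum_singleton]

lemma rankSum_last {A : Type*} [CommRing A] (x : ℕ × ℕ → A) :
    rankSum x (n + 4) (2 * n + 5) = x (n + 2, n + 3) :=
  rankSum_eq_of_forall x fun d ↦ by rw [mem_cells, Prod.ext_iff]; omega

lemma rankSum_penult {A : Type*} [CommRing A] (x : ℕ × ℕ → A) :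
    rankSum x (n + 4) (2 * n + 4) = x (n + 1, n + 3) :=
  rankSum_eq_of_forall x fun d ↦ by rw [mem_cells, Prod.ext_iff]; omega

lemma X_smul_eq_rankSum_smul {f : ℕ} {M : Type*} [AddCommGroup M] [Module (PfaffianRing R f) M]
    [Module (ParamRing R f) M] [IsScalarTower (ParamRing R f) (PfaffianRing R f) M]
    (k : Fin (2 * f - 3)) (v : M) :
    (MvPolynomial.X k : ParamRing R f) • v = rankSum (entry R f) f (k + 1) • v := by
  rw [← algebraMap_smul (PfaffianRing R f), algebraMap_param, paramHom_X]

lemma rankSum_mul_eq_X_smul {f : ℕ} (k : Fin (2 * f - 3)) (a : PfaffianRing R f) :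
    rankSum (entry R f) f (k + 1) * a = (MvPolynomial.X k : ParamRing R f) • a := by
  rw [X_smul_eq_rankSum_smul, smul_eq_mul]

lemma X_lastParam_smul {M : Type*} [AddCommGroup M] [Module (PfaffianRing R (n + 4)) M]
    [Module (ParamRing R (n + 4)) M]
    [IsScalarTower (ParamRing R (n + 4)) (PfaffianRing R (n + 4)) M] (v : M) :
    (MvPolynomial.X (lastParam n) : ParamRing R (n + 4)) • v =
      entry R (n + 4) (n + 2, n + 3) • v := by
  rw [X_smul_eq_rankSum_smul, ← rankSum_last (entry R (n + 4))]; rfl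

lemma X_penultParam_smul {M : Type*} [AddCommGroup M] [Module (PfaffianRing R (n + 4)) M]
    [Module (ParamRing R (n + 4)) M]
    [IsScalarTower (ParamRing R (n + 4)) (PfaffianRing R (n + 4)) M] (v : M) :
    (MvPolynomial.X (penultParam n) : ParamRing R (n + 4)) • v =
      entry R (n + 4) (n + 1, n + 3) • v := by
  rw [X_smul_eq_rankSum_smul, ← rankSum_penult (entry R (n + 4))]; rfl

theorem exists_eq_smul_column_last {v : Fin (n + 4) → PfaffianRing R (n + 4)}
    (hv : v ∈ columnModule R (n + 4)) (hlast : v (Fin.last _) = 0) :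
    ∃ t : PfaffianRing R (n + 4), v = t • column R (n + 4) (n + 3) := by
  let a : Fin (n + 4) := ⟨n + 2, by omega⟩
  let c : Fin (n + 4) := ⟨n + 1, by omega⟩
  have hcol : (MvPolynomial.X (lastParam n) : ParamRing R (n + 4)) • v =
      v a • column R (n + 4) (n + 3) := by
    have h := altEntry_smul_of_mem hv a (Fin.last _)
    rw [hlast, zero_smul, add_zero, sub_eq_zero, altEntry_of_le (Fin.le_last a)] at h
    rw [X_lastParam_smul]
    exact h
  obtain ⟨t, ht⟩ : ∃ t : PfaffianRing R (n + 4),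
      v a = (MvPolynomial.X (lastParam n) : ParamRing R (n + 4)) • t := by
    refine exists_eq_X_smul_of_X_smul_eq (i := lastParam n) (j := penultParam n) (a := v c)
      (by simp [lastParam, penultParam]) ?_
    rw [X_penultParam_smul, ← Pi.smul_apply, hcol, Pi.smul_apply, smul_eq_mul, smul_eq_mul,
      mul_comm, column, altEntry_of_le (by omega)]
  refine ⟨t, isSMulRegular_X (R := R) (i := lastParam n) ?_⟩
  simp only [hcol, ht, smul_assoc]

end LastParameters

section Truncate

variable {n : ℕ} {b : Finset (ℕ × ℕ)}

lemma IsInnerChain.subset {f : ℕ} {b' : Finset (ℕ × ℕ)} (hb : IsInnerChain f b) (h : b' ⊆ b) :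
    IsInnerChain f b' :=
  ⟨fun c hc ↦ hb.inner c (h hc), fun c hc d hd ↦ hb.strict c (h hc) d (h hd)⟩

lemma IsInnerChain.of_forall_snd_ne (hb : IsInnerChain (n + 4) b) (h : ∀ c ∈ b, c.2 ≠ n + 2) :
    IsInnerChain (n + 3) b :=
  ⟨fun c hc ↦ by have := hb.inner c hc; have := h c hc; omega, hb.strict⟩

lemma IsInnerChain.snd_ne (hb : IsInnerChain (n + 3) b) : ∀ c ∈ b, c.2 ≠ n + 2 := fun c hc ↦ by
  have := hb.inner c hc; omega

lemma IsInnerChain.insert_corner (hb : IsInnerChain (n + 3) b) :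
    IsInnerChain (n + 4) (insert (n + 1, n + 2) b) := by
  refine ⟨Finset.forall_mem_insert _ _ _ |>.2 ⟨by omega, hb.succ.inner⟩, fun c hc d hd hne ↦ ?_⟩
  rcases Finset.mem_insert.1 hc with rfl | hc <;> rcases Finset.mem_insert.1 hd with rfl | hd
  · exact absurd rfl hne
  · have := hb.inner d hd; omega
  · have := hb.inner c hc; omega
  · exact hb.strict c hc d hd hne

variable (n) in
/-- A chain for a matrix of size `n + 4` without its cell in column `n + 2`, which is the last
column that an inner chain can meet. -/
def truncate (b : Finset (ℕ × ℕ)) : Finset (ℕ × ℕ) := b.filter (·.2 ≠ n + 2)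

lemma truncate_of_forall_snd_ne (h : ∀ c ∈ b, c.2 ≠ n + 2) : truncate n b = b :=
  Finset.filter_true_of_mem h

lemma isInnerChain_truncate (hb : IsInnerChain (n + 4) b) : IsInnerChain (n + 3) (truncate n b) :=
  (hb.subset (Finset.filter_subset _ _)).of_forall_snd_ne fun _ hc ↦ (Finset.mem_filter.1 hc).2

lemma truncate_insert_corner (hb : IsInnerChain (n + 3) b) :
    truncate n (insert (n + 1, n + 2) b) = b := by
  rw [truncate, Finset.filter_insert, if_neg (by simp)]
  exact truncate_of_forall_snd_ne hb.snd_ne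

lemma IsInnerChain.eq_of_snd_eq {f i i' j : ℕ} (hb : IsInnerChain f b) (h : (i, j) ∈ b)
    (h' : (i', j) ∈ b) : i = i' := by
  by_contra hne
  have := hb.strict _ h _ h' (by simpa)
  omega

lemma IsInnerChain.truncate_eq_erase {i : ℕ} (hb : IsInnerChain (n + 4) b) (h : (i, n + 2) ∈ b) :
    truncate n b = b.erase (i, n + 2) := by
  ext ⟨i', j⟩
  simp only [truncate, Finset.mem_filter, Finset.mem_erase, ne_eq, Prod.mk.injEq]
  refine ⟨fun ⟨hc, hj⟩ ↦ ⟨fun h' ↦ hj h'.2, hc⟩, fun ⟨hne, hc⟩ ↦ ⟨hc, fun hj ↦ hne ⟨?_, hj⟩⟩⟩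
  exact hb.eq_of_snd_eq (hj ▸ hc) h

variable (n) in
open scoped Classical in
/-- The column `i - 1` exchanged for the cell `(i, n + 2)` of a chain, or `n + 1` if the chain
does not meet the column `n + 2`. -/
def exchangeCol (b : Finset (ℕ × ℕ)) : ℕ :=
  if h : ∃ i, (i, n + 2) ∈ b then h.choose - 1 else n + 1

lemma exchangeCol_of_forall_snd_ne (h : ∀ c ∈ b, c.2 ≠ n + 2) : exchangeCol n b = n + 1 :=
  dif_neg fun ⟨_, hi⟩ ↦ h _ hi rfl

lemma IsInnerChain.exchangeCol_eq {i : ℕ} (hb : IsInnerChain (n + 4) b) (h : (i, n + 2) ∈ b) :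
    exchangeCol n b = i - 1 := by
  have hex : ∃ i, (i, n + 2) ∈ b := ⟨i, h⟩
  rw [exchangeCol, dif_pos hex, hb.eq_of_snd_eq hex.choose_spec h]

end Truncate

section Generators

variable (R : Type u) [CommRing R] (n : ℕ)

/-- The generators of the column module over the parameter ring, two for each inner chain. -/
def columnGen : InnerChain (n + 4) ⊕ InnerChain (n + 4) → Fin (n + 4) → PfaffianRing R (n + 4)
  | .inl b => if (n + 1, n + 2) ∈ b.1 then
      cellProd (entry R (n + 4)) (truncate n b).val • column R (n + 4) (n + 2)
    else cellProd (entry R (n + 4)) b.1.val • column R (n + 4) (n + 3)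
  | .inr b => cellProd (entry R (n + 4)) (truncate n b).val • column R (n + 4) (exchangeCol n b)

/-- The span of the generators over the parameter ring. -/
def genSpan : Submodule (ParamRing R (n + 4)) (Fin (n + 4) → PfaffianRing R (n + 4)) :=
  .span _ (Set.range (columnGen R n))

variable {R n} {b : Finset (ℕ × ℕ)}

lemma cellProd_smul_column_last_mem (hb : IsInnerChain (n + 4) b) (h : (n + 1, n + 2) ∉ b) :
    cellProd (entry R (n + 4)) b.val • column R (n + 4) (n + 3) ∈ genSpan R n :=
  Submodule.subset_span ⟨.inl ⟨b, hb⟩, if_neg h⟩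

lemma cellProd_smul_column_penult_mem (hb : IsInnerChain (n + 3) b) :
    cellProd (entry R (n + 4)) b.val • column R (n + 4) (n + 2) ∈ genSpan R n := by
  refine Submodule.subset_span ⟨.inl ⟨_, hb.insert_corner⟩, ?_⟩
  simp only [columnGen, Finset.mem_insert_self, if_true, truncate_insert_corner hb]

lemma cellProd_smul_column_antepenult_mem (hb : IsInnerChain (n + 3) b) :
    cellProd (entry R (n + 4)) b.val • column R (n + 4) (n + 1) ∈ genSpan R n := by
  refine Submodule.subset_span ⟨.inr ⟨b, hb.succ⟩, ?_⟩
  rw [columnGen, truncate_of_forall_snd_ne hb.snd_ne, exchangeCol_of_forall_snd_ne hb.snd_ne]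

lemma cellProd_erase_smul_column_mem {i : ℕ} (hb : IsInnerChain (n + 4) b)
    (h : (i, n + 2) ∈ b) : cellProd (entry R (n + 4)) (b.erase (i, n + 2)).val •
      column R (n + 4) (i - 1) ∈ genSpan R n := by
  refine Submodule.subset_span ⟨.inr ⟨b, hb⟩, ?_⟩
  rw [columnGen, hb.truncate_eq_erase h, hb.exchangeCol_eq h]

lemma genSpan_le : genSpan R n ≤ (columnModule R (n + 4)).restrictScalars _ := by
  refine Submodule.span_le.2 ?_
  rintro _ ⟨b | b, rfl⟩
  · rw [columnGen]
    split_ifs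
    all_goals exact Submodule.smul_mem _ _ (column_mem_columnModule (by omega))
  · refine Submodule.smul_mem _ _ (column_mem_columnModule ?_)
    by_cases h : ∃ i, (i, n + 2) ∈ b.1
    · obtain ⟨i, hi⟩ := h
      rw [b.2.exchangeCol_eq hi]
      have := b.2.inner _ hi
      omega
    · rw [exchangeCol, dif_neg h]
      omega

variable (R n) in
/-- The ideal of last coordinates of the column module, described by the generators over the
parameter ring. -/
def lastSpan : Submodule (ParamRing R (n + 4)) (PfaffianRing R (n + 4)) :=
  (genSpan R n).map (LinearMap.proj (Fin.last (n + 3)))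

lemma dropLast_eq_zero_of_mem_lastSpan {a : PfaffianRing R (n + 4)} (ha : a ∈ lastSpan R n) :
    dropLast R (n + 3) a = 0 := by
  obtain ⟨v, hv, rfl⟩ := ha
  exact dropLast_apply_last (genSpan_le hv)

lemma entry_mul_mem_lastSpan {a : PfaffianRing R (n + 4)} {j : ℕ} (hj : j ≤ n + 3)
    (h : a • column R (n + 4) j ∈ genSpan R n) : entry R (n + 4) (j, n + 3) * a ∈ lastSpan R n := by
  refine ⟨-(a • column R (n + 4) j), neg_mem h, ?_⟩
  simp only [LinearMap.proj_apply, Pi.neg_apply, Pi.smul_apply, column, smul_eq_mul, Fin.val_last]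
  rw [altEntry_of_ge hj, mul_neg, neg_neg, mul_comm a]

lemma X_smul_liftComb (k : Fin (2 * (n + 3) - 3)) (s : InnerChain (n + 3) → ParamRing R (n + 3)) :
    (.X (k.castLE (by omega)) : ParamRing R (n + 4)) • liftComb R (n + 3) s =
      liftComb R (n + 3) ((.X k : ParamRing R (n + 3)) • s) := by
  simp [liftComb_apply, Finset.smul_sum, smul_smul, liftParam]

lemma entry_mul_liftComb_mem_lastSpan {j : ℕ} (hj : j ≤ n + 3)
    (h : ∀ b, IsInnerChain (n + 3) b →
      cellProd (entry R (n + 4)) b.val • column R (n + 4) j ∈ genSpan R n)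
    (s : InnerChain (n + 3) → ParamRing R (n + 3)) :
    entry R (n + 4) (j, n + 3) * liftComb R (n + 3) s ∈ lastSpan R n := by
  rw [liftComb_apply, Finset.mul_sum]
  refine sum_mem fun b _ ↦ ?_
  rw [mul_smul_comm]
  exact Submodule.smul_mem _ _ (entry_mul_mem_lastSpan hj (h b b.2))

lemma isStraighteningFiltration_lastSpan_sup_range_liftComb :
    IsStraighteningFiltration (n + 4) (entry R (n + 4)) fun _ ↦
      ((lastSpan R n).restrictScalars R ⊔ (liftComb R (n + 3)).range).toAddSubgroup where
  rankSum_mul_mem {_ r a} h₁ h₂ ha := by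
    obtain ⟨l, hl, _, ⟨s, rfl⟩, rfl⟩ := Submodule.mem_sup.1 ha
    obtain ⟨k, rfl⟩ : ∃ k : Fin (2 * (n + 4) - 3), r = k + 1 := ⟨⟨r - 1, by omega⟩, by simp; omega⟩
    rw [mul_add (rankSum _ _ _)]
    refine add_mem (Submodule.mem_sup_left ?_) ?_
    · rw [rankSum_mul_eq_X_smul]
      exact Submodule.smul_mem (lastSpan R n) _ hl
    · rcases lt_trichotomy (k : ℕ) (2 * n + 3) with hk | hk | hk
      · rw [rankSum_mul_eq_X_smul]
        exact Submodule.mem_sup_right ⟨_, (X_smul_liftComb ⟨k, by omega⟩ s).symm⟩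
      · rw [hk, rankSum_penult]
        exact Submodule.mem_sup_left <| entry_mul_liftComb_mem_lastSpan (by omega)
          (fun b ↦ cellProd_smul_column_antepenult_mem) s
      · rw [show (k : ℕ) = 2 * n + 4 by omega, rankSum_last]
        exact Submodule.mem_sup_left <| entry_mul_liftComb_mem_lastSpan (by omega)
          (fun b ↦ cellProd_smul_column_penult_mem) s
  innerChain_mem b hb := by
    by_cases h : ∃ i, (i, n + 2) ∈ b
    · obtain ⟨i, hi⟩ := h
      refine .inr ⟨_, hi, fun c hc hr hlt ↦ Submodule.mem_sup_left ?_⟩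
      obtain rfl : c = (i - 1, n + 3) := by
        rw [mem_cells] at hc
        rw [Prod.ext_iff]
        omega
      have := hb.inner _ hi
      exact entry_mul_mem_lastSpan (by omega) (cellProd_erase_smul_column_mem hb hi)
    · have hb' := hb.of_forall_snd_ne fun c hc hj ↦ h ⟨c.1, hj ▸ hc⟩
      refine .inl (Submodule.mem_sup_right ⟨Pi.single ⟨b, hb'⟩ 1, ?_⟩)
      rw [liftComb_apply, Finset.sum_eq_single ⟨b, hb'⟩ (fun c _ hc ↦ ?_) (by simp)]
      · rw [Pi.single_eq_same, map_one, one_smul]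
      · rw [Pi.single_eq_of_ne hc, map_zero, zero_smul]

theorem mem_lastSpan_of_dropLast_eq_zero {a : PfaffianRing R (n + 4)}
    (ha : dropLast R (n + 3) a = 0) : a ∈ lastSpan R n := by
  obtain ⟨l, hl, _, ⟨s, rfl⟩, rfl⟩ := Submodule.mem_sup.1 <|
    show a ∈ (lastSpan R n).restrictScalars R ⊔ (liftComb R (n + 3)).range by
      refine Submodule.span_le.2 ?_ (mem_span_cellProd R (adjoin_entry R (n + 4)) a)
      rintro _ ⟨C, hC, rfl⟩
      exact isStraighteningFiltration_lastSpan_sup_range_liftComb.cellProd_mem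
        (pluckerRel_entry R (n + 4)) C hC
  rw [map_add, dropLast_eq_zero_of_mem_lastSpan hl, zero_add, dropLast_liftComb] at ha
  rwa [(chainComb_entry_bijective R (n + 3)).1 (ha.trans (map_zero _).symm), map_zero, add_zero]

lemma smul_column_last_mem_genSpan (a : PfaffianRing R (n + 4)) :
    a • column R (n + 4) (n + 3) ∈ genSpan R n := by
  rw [← (chainBasis R (n + 4)).sum_repr a, Finset.sum_smul]
  refine sum_mem fun b _ ↦ ?_
  rw [smul_assoc, chainBasis_apply]
  refine Submodule.smul_mem _ _ ?_
  by_cases h : (n + 1, n + 2) ∈ b.1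
  · have hrel : entry R (n + 4) (n + 1, n + 2) • column R (n + 4) (n + 3) =
        (.X (penultParam n) : ParamRing R (n + 4)) • column R (n + 4) (n + 2) -
          (.X (lastParam n) : ParamRing R (n + 4)) • column R (n + 4) (n + 1) := by
      have h₃ := altEntry_smul_column (R := R) (f := n + 4) ⟨n + 1, by omega⟩ ⟨n + 2, by omega⟩
        ⟨n + 3, by omega⟩
      rw [altEntry_of_le (by simp), altEntry_of_le (by simp), altEntry_of_le (by simp)] at h₃
      rw [X_penultParam_smul, X_lastParam_smul]
      exact eq_sub_of_add_eq (sub_eq_zero.1 ((sub_add_eq_add_sub _ _ _).symm.trans h₃))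
    have hsplit : b.1.val = (n + 1, n + 2) ::ₘ (truncate n b).val := by
      rw [b.2.truncate_eq_erase h, Finset.erase_val, Multiset.cons_erase h]
    rw [hsplit, cellProd_cons, mul_comm (entry _ _ _), mul_smul, hrel, smul_sub,
      smul_comm _ (MvPolynomial.X (penultParam n)), smul_comm _ (MvPolynomial.X (lastParam n))]
    have hb := isInnerChain_truncate b.2
    exact sub_mem (Submodule.smul_mem _ _ (cellProd_smul_column_penult_mem hb))
      (Submodule.smul_mem _ _ (cellProd_smul_column_antepenult_mem hb))
  · exact cellProd_smul_column_last_mem b.2 h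

variable (R n) in
theorem genSpan_eq_restrictScalars_columnModule :
    genSpan R n = (columnModule R (n + 4)).restrictScalars (ParamRing R (n + 4)) := by
  refine le_antisymm genSpan_le fun v hv ↦ ?_
  obtain ⟨g, hg, hgv⟩ := mem_lastSpan_of_dropLast_eq_zero (dropLast_apply_last hv)
  obtain ⟨t, ht⟩ := exists_eq_smul_column_last (sub_mem hv (genSpan_le hg))
    (sub_eq_zero.2 hgv.symm)
  rw [← sub_add_cancel v g, ht]
  exact add_mem (smul_column_last_mem_genSpan t) hg

lemma eq_zero_of_mul_entry_zero_one {a : PfaffianRing R (n + 4)}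
    (h : a * entry R (n + 4) (0, 1) = 0) : a = 0 := by
  have hrank : rankSum (entry R (n + 4)) (n + 4) 1 = entry R (n + 4) (0, 1) :=
    rankSum_eq_of_forall _ fun d ↦ by rw [mem_cells, Prod.ext_iff]; omega
  let k : Fin (2 * (n + 4) - 3) := ⟨0, by omega⟩
  refine (isSMulRegular_X (R := R) (i := k)).right_eq_zero_of_smul ?_
  rw [← rankSum_mul_eq_X_smul, zero_add, hrank, mul_comm, h]

variable (R n) in
theorem linearIndependent_columnGen :
    LinearIndependent (ParamRing R (n + 4)) (columnGen R n) := by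
  let w : InnerChain (n + 4) ⊕ InnerChain (n + 4) → Fin (n + 4) → PfaffianRing R (n + 4) :=
    Sum.elim (chainBasis R (n + 4) · • column R (n + 4) 0)
      (chainBasis R (n + 4) · • column R (n + 4) 1)
  refine linearIndependent_of_mem_span_range (w := w) (fun b ↦ ?_) ?_
  · change _ ∈ genSpan R n
    rw [genSpan_eq_restrictScalars_columnModule]
    rcases b with b | b
    all_goals exact Submodule.smul_mem _ _ (column_mem_columnModule (by omega))
  rw [Fintype.linearIndependent_iff]
  intro s hs
  simp only [Fintype.sum_sum_type, w, Sum.elim_inl, Sum.elim_inr, ← smul_assoc,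
    ← Finset.sum_smul] at hs
  have h₀ := congrFun hs ⟨1, by omega⟩
  have h₁ := congrFun hs ⟨0, by omega⟩
  simp only [Pi.add_apply, Pi.smul_apply, Pi.zero_apply, column, altEntry_self, smul_eq_mul,
    altEntry_of_ge zero_le_one, altEntry_of_le zero_le_one, mul_neg, neg_eq_zero, mul_zero,
    add_zero, zero_add] at h₀ h₁
  have hli := Fintype.linearIndependent_iff.1 (chainBasis R (n + 4)).linearIndependent
  exact Sum.rec (hli _ (eq_zero_of_mul_entry_zero_one h₀))
    (hli _ (eq_zero_of_mul_entry_zero_one h₁))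

variable (R) in
/-- The generators as a basis of the column module over the parameter ring. -/
def columnBasis : Module.Basis (InnerChain (n + 4) ⊕ InnerChain (n + 4)) (ParamRing R (n + 4))
    (columnModule R (n + 4)) :=
  (Module.Basis.span (linearIndependent_columnGen R n)).map <|
    (LinearEquiv.ofEq _ _ (genSpan_eq_restrictScalars_columnModule R n)).trans <|
      (Submodule.restrictScalarsEquiv _ _ _ _).restrictScalars _

end Generators

/-! ### Vanishing of Ext from a perfect trace form -/

section TraceDual

variable {S A : Type*} [CommRing S] [CommRing A] [Algebra S A] {σ : A →ₗ[S] S}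

lemma eq_of_forall_mul_eq [(mulPairing σ).IsPerfPair] {a b : A}
    (h : ∀ c, σ (a * c) = σ (b * c)) : a = b :=
  (mulPairing σ).toPerfPair.injective (LinearMap.ext h)

variable {Q : Type*} [AddCommGroup Q] [Module A Q] [Module S Q] [IsScalarTower S A Q]

variable (σ Q) in
/-- The map from the `A`-dual to the `S`-dual of an `A`-module given by composition with a linear
functional `σ : A → S`. -/
def traceDual : Module.Dual A Q →ₗ[S] Module.Dual S Q where
  toFun g := σ ∘ₗ g.restrictScalars S
  map_add' g h := LinearMap.ext fun q ↦ map_add σ (g q) (h q)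
  map_smul' s g := LinearMap.ext fun q ↦ map_smul σ s (g q)

lemma traceDual_apply (g : Module.Dual A Q) (q : Q) : traceDual σ Q g q = σ (g q) := rfl

theorem traceDual_bijective [(mulPairing σ).IsPerfPair] :
    Function.Bijective (traceDual σ Q) := by
  refine ⟨fun g h hgh ↦ LinearMap.ext fun q ↦ eq_of_forall_mul_eq (σ := σ) fun c ↦ ?_, fun τ ↦ ?_⟩
  · simpa only [traceDual_apply, map_smul, smul_eq_mul, mul_comm c] using
      LinearMap.congr_fun hgh (c • q)
  · choose g hg using fun q ↦ (mulPairing σ).toPerfPair.surjective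
      (τ ∘ₗ (LinearMap.toSpanSingleton A Q q).restrictScalars S)
    replace hg q c : σ (g q * c) = τ (c • q) := LinearMap.congr_fun (hg q) c
    refine ⟨{ toFun := g, map_add' := fun p q ↦ ?_, map_smul' := fun r q ↦ ?_ },
      LinearMap.ext fun q ↦ ?_⟩
    · exact eq_of_forall_mul_eq (σ := σ) fun c ↦ by
        rw [add_mul, map_add, hg, hg, hg, smul_add, map_add]
    · exact eq_of_forall_mul_eq (σ := σ) fun c ↦ by
        rw [hg, RingHom.id_apply, smul_eq_mul, mul_comm r, mul_assoc, hg, smul_smul, mul_comm]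
    · exact (congrArg σ (mul_one (g q))).symm.trans ((hg q 1).trans (by rw [one_smul]))

theorem projective_dual_of_isPerfPair (σ : A →ₗ[S] S) [(mulPairing σ).IsPerfPair]
    [Module.Free S Q] [Module.Finite S Q] : Module.Projective S (Module.Dual A Q) :=
  .of_equiv (LinearEquiv.ofBijective (traceDual σ Q) traceDual_bijective).symm

end TraceDual

section Ext

lemma projective_trans (S A P : Type*) [CommRing S] [CommRing A] [Algebra S A]
    [Module.Free S A] [AddCommGroup P] [Module A P] [Module S P] [IsScalarTower S A P]
    [Module.Projective A P] : Module.Projective S P := by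
  obtain ⟨s, hs⟩ := ‹Module.Projective A P›.out
  exact .of_split (s.restrictScalars S) ((Finsupp.linearCombination A id).restrictScalars S)
    (LinearMap.ext hs)

theorem subsingleton_ext_succ_iff (R : Type*) [Ring R] {C : Type*} [Category* C] [Abelian C]
    [Linear R C] [EnoughProjectives C] {X : C} (P : ProjectiveResolution X) (Y : C) (n : ℕ) :
    Subsingleton (((Ext R C (n + 1)).obj (.op X)).obj Y) ↔
      ∀ g : P.complex.X (n + 1) ⟶ Y, P.complex.d (n + 2) (n + 1) ≫ g = 0 →
        ∃ h : P.complex.X n ⟶ Y, P.complex.d (n + 1) n ≫ h = g := by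
  rw [← ModuleCat.isZero_iff_subsingleton, (P.isoExt (n + 1) Y).isZero_iff,
    ← HomologicalComplex.exactAt_iff_isZero_homology,
    HomologicalComplex.exactAt_iff' _ n (n + 1) (n + 2) (by simp) (by simp),
    ShortComplex.moduleCat_exact_iff]
  rfl

variable {S A : Type u} [CommRing S] [CommRing A] [Algebra S A]

instance [Module.Free S A] :
    (ModuleCat.restrictScalars.{u} (algebraMap S A)).PreservesProjectiveObjects where
  projective_obj {P} hP := by
    let : Module S P := .compHom P (algebraMap S A)
    have : IsScalarTower S A P := .of_compHom S A P
    have : Module.Projective A P := (IsProjective.iff_projective P).2 hP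
    exact (IsProjective.iff_projective _).1 (projective_trans S A P)

-- A cocycle with values in `A` is determined by its composition with `σ`, which is a cocycle on
-- the same resolution, considered over `S`.
theorem subsingleton_ext_of_restrictScalars [Module.Free S A] (σ : A →ₗ[S] S)
    [(mulPairing σ).IsPerfPair] {M : ModuleCat.{u} A} {n : ℕ}
    (h : Subsingleton (((Ext S (ModuleCat.{u} S) (n + 1)).obj
      (.op ((ModuleCat.restrictScalars (algebraMap S A)).obj M))).obj (ModuleCat.of S S))) :
    Subsingleton (((Ext A (ModuleCat.{u} A) (n + 1)).obj (.op M)).obj (ModuleCat.of A A)) := by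
  let F := ModuleCat.restrictScalars.{u} (algebraMap S A)
  obtain ⟨P⟩ := (inferInstance : HasProjectiveResolution M).out
  let (Q : ModuleCat.{u} A) : Module S Q := .compHom Q (algebraMap S A)
  have (Q : ModuleCat.{u} A) : IsScalarTower S A Q := .of_compHom S A Q
  rw [subsingleton_ext_succ_iff A P]
  rw [subsingleton_ext_succ_iff S (F.mapProjectiveResolution P)] at h
  intro g hg
  obtain ⟨τ, hτ⟩ := h (ModuleCat.ofHom (traceDual σ (P.complex.X (n + 1)) g.hom)) <| by
    ext q
    exact (congrArg σ (LinearMap.congr_fun (congrArg ModuleCat.Hom.hom hg) q)).trans (map_zero σ)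
  obtain ⟨t, ht⟩ := (traceDual_bijective (σ := σ) (Q := P.complex.X n)).2 τ.hom
  refine ⟨ModuleCat.ofHom t, ModuleCat.hom_ext <|
    (traceDual_bijective (σ := σ) (Q := P.complex.X (n + 1))).1 ?_⟩
  ext q
  exact (LinearMap.congr_fun ht _).trans (LinearMap.congr_fun (congrArg ModuleCat.Hom.hom hτ) q)

theorem subsingleton_ext_of_isPerfPair [Module.Free S A] (σ : A →ₗ[S] S)
    [(mulPairing σ).IsPerfPair] (M : Type u) [AddCommGroup M] [Module A M] [hM : Module S M]
    [IsScalarTower S A M] [Module.Projective S M] {i : ℕ} (hi : 0 < i) :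
    Subsingleton (((Ext A (ModuleCat.{u} A) i).obj (.op (ModuleCat.of A M))).obj
      (ModuleCat.of A A)) := by
  obtain ⟨n, rfl⟩ := Nat.exists_eq_add_one.2 hi
  obtain rfl : hM = .compHom M (algebraMap S A) :=
    Module.ext' _ _ fun s m ↦ (algebraMap_smul A s m).symm
  let : Module S M := .compHom M (algebraMap S A)
  have : Projective ((ModuleCat.restrictScalars (algebraMap S A)).obj (ModuleCat.of A M)) :=
    (IsProjective.iff_projective M).1 ‹_›
  exact subsingleton_ext_of_restrictScalars σ
    (ModuleCat.subsingleton_of_isZero (isZero_Ext_succ_of_projective _ _ n))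

end Ext

section ColumnModule

variable (R : Type u) [CommRing R] {f : ℕ}

theorem free_columnModule (hf : 4 ≤ f) : Module.Free (ParamRing R f) (columnModule R f) := by
  obtain ⟨n, rfl⟩ := Nat.exists_eq_add_of_le' hf
  exact .of_basis (columnBasis R)

theorem finite_columnModule (hf : 4 ≤ f) : Module.Finite (ParamRing R f) (columnModule R f) := by
  obtain ⟨n, rfl⟩ := Nat.exists_eq_add_of_le' hf
  exact .of_basis (columnBasis R)

end ColumnModule

theorem stmt_10_general (R₀ : Type u) [CommRing R₀] (f : ℕ) (hf : 4 ≤ f) :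
    (∀ i : ℕ, 0 < i →
        Subsingleton
          (((Ext (MvPolynomial (P2 f) R₀ ⧸ Pf4 R₀ f)
                (ModuleCat.{u} (MvPolynomial (P2 f) R₀ ⧸ Pf4 R₀ f)) i).obj
              (Opposite.op (ModuleCat.of _ (NA R₀ f)))).obj
            (ModuleCat.of _ (MvPolynomial (P2 f) R₀ ⧸ Pf4 R₀ f)))) ∧
      (∀ i : ℕ, 0 < i →
        Subsingleton
          (((Ext (MvPolynomial (P2 f) R₀ ⧸ Pf4 R₀ f)
                (ModuleCat.{u} (MvPolynomial (P2 f) R₀ ⧸ Pf4 R₀ f)) i).obj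
              (Opposite.op (ModuleCat.of _
                (Module.Dual (MvPolynomial (P2 f) R₀ ⧸ Pf4 R₀ f) (NA R₀ f))))).obj
            (ModuleCat.of _ (MvPolynomial (P2 f) R₀ ⧸ Pf4 R₀ f)))) := by
  rw [NA_eq_columnModule]
  have := isPerfPair_mulPairing_chainTrace R₀ f
  have := free_columnModule R₀ hf
  have := finite_columnModule R₀ hf
  have : Module.Projective (ParamRing R₀ f) (Module.Dual (PfaffianRing R₀ f) (columnModule R₀ f)) :=
    projective_dual_of_isPerfPair (chainTrace R₀ f)
  exact ⟨fun i hi ↦ subsingleton_ext_of_isPerfPair (chainTrace R₀ f) (columnModule R₀ f) hi,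
    fun i hi ↦ subsingleton_ext_of_isPerfPair (chainTrace R₀ f)
      (Module.Dual (PfaffianRing R₀ f) (columnModule R₀ f)) hi⟩

/-- if `R₀` is a Gorenstein domain and `f ≥ 4`, then
`Ext^i_A(N, A) = 0` for all `i > 0`, and likewise `Ext^i_A(N*, A) = 0` for
all `i > 0` (where `N* ≅ N`); consequently a free resolution of `N` spliced
with the dual of a free resolution of `N* ≅ N` is a totally acyclic complex
of free `A`-modules. -/
theorem stmt_10 (R₀ : Type u) [CommRing R₀] [IsDomain R₀]
    (hGor : IsGorensteinRing R₀) (f : ℕ) (hf : 4 ≤ f) :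
    (∀ i : ℕ, 0 < i →
        Subsingleton
          (((Ext (MvPolynomial (P2 f) R₀ ⧸ Pf4 R₀ f)
                (ModuleCat.{u} (MvPolynomial (P2 f) R₀ ⧸ Pf4 R₀ f)) i).obj
              (Opposite.op (ModuleCat.of _ (NA R₀ f)))).obj
            (ModuleCat.of _ (MvPolynomial (P2 f) R₀ ⧸ Pf4 R₀ f)))) ∧
      (∀ i : ℕ, 0 < i →
        Subsingleton
          (((Ext (MvPolynomial (P2 f) R₀ ⧸ Pf4 R₀ f)
                (ModuleCat.{u} (MvPolynomial (P2 f) R₀ ⧸ Pf4 R₀ f)) i).obj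
              (Opposite.op (ModuleCat.of _
                (Module.Dual (MvPolynomial (P2 f) R₀ ⧸ Pf4 R₀ f) (NA R₀ f))))).obj
            (ModuleCat.of _ (MvPolynomial (P2 f) R₀ ⧸ Pf4 R₀ f)))) := by
  exact stmt_10_general R₀ f hf

end AluffiStmt
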